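/- If G is an imbalanced weak subdivision of K_{3,3}, then there exists a graph G′, obtained from G by moving one edge between two adjacent chains of G, such that d_2(G′) ≤ d_2(G), d_3(G′) < d_3(G) and d_4(G′) < d_4(G). -/

import Mathlib

open Classical Finset

noncomputable section

/-- A finite multigraph: edges carry two (possibly equal) endpoints. -/
structure Multigraph where
  V : Type
  E : Type
  [fintV : Fintype V]
  [fintE : Fintype E]
  src : E → V
  tgt : E → V

attribute [instance] Multigraph.fintV Multigraph.fintE

namespace Multigraph

variable (G : Multigraph)

/-- Number of vertices. -/
def nV : ℕ := Fintype.card G.V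

/-- Number of edges (with multiplicity). -/
def nE : ℕ := Fintype.card G.E

/-- One step along an edge belonging to the edge set `S`. -/
def stepOn (S : Finset G.E) (u v : G.V) : Prop :=
  ∃ e ∈ S, (G.src e = u ∧ G.tgt e = v) ∨ (G.src e = v ∧ G.tgt e = u)

/-- The spanning subgraph with edge set `S` is connected. -/
def ConnOn (S : Finset G.E) : Prop :=
  ∀ u v : G.V, Relation.ReflTransGen (G.stepOn S) u v

/-- `G` is connected. -/
def Connected : Prop := G.ConnOn Finset.univ

/-- The edge set `F` disconnects `G` (i.e. is a disconnection). -/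
def Disconnects (F : Finset G.E) : Prop := ¬ G.ConnOn (Finset.univ \ F)

/-- `d i G`: the number of `i`-disconnections of `G`. -/
def d (i : ℕ) : ℕ :=
  ((Finset.univ : Finset (Finset G.E)).filter fun F => F.card = i ∧ G.Disconnects F).card

/-- The all-terminal reliability `R(G,p)`: each edge is independently retained with
probability `p`; this is the probability that the retained spanning subgraph is connected. -/
def rel (p : ℝ) : ℝ :=
  ∑ S : Finset G.E, if G.ConnOn S then p ^ S.card * (1 - p) ^ (G.nE - S.card) else 0

/-- `e` is a bridge. -/
def IsBridge (e : G.E) : Prop := G.Disconnects {e}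

def Bridgeless : Prop := ∀ e : G.E, ¬ G.IsBridge e

/-- The number of spanning trees of `G` (connected spanning subgraphs with `nV - 1` edges). -/
def treeCount : ℕ :=
  ((Finset.univ : Finset (Finset G.E)).filter fun S => S.card + 1 = G.nV ∧ G.ConnOn S).card

/-- The edge-connectivity: the least size of a disconnecting set of edges. -/
def edgeConnectivity : ℕ :=
  sInf {i : ℕ | ∃ F : Finset G.E, F.card = i ∧ G.Disconnects F}

/-- Degree of a vertex (a loop counts twice). -/
def deg (v : G.V) : ℕ :=
  (Finset.univ.filter fun e => G.src e = v).card +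
    (Finset.univ.filter fun e => G.tgt e = v).card

/-- The edges crossing the vertex set `A`. -/
def cutEdges (A : Finset G.V) : Finset G.E :=
  Finset.univ.filter fun e =>
    (G.src e ∈ A ∧ G.tgt e ∉ A) ∨ (G.src e ∉ A ∧ G.tgt e ∈ A)

/-- `F` is a cut: the set of edges crossing a nontrivial bipartition of the vertices. -/
def IsCut (F : Finset G.E) : Prop :=
  ∃ A : Finset G.V, A.Nonempty ∧ A ≠ Finset.univ ∧ F = G.cutEdges A

/-- `F` is a bond: a minimal cut. -/
def IsBond (F : Finset G.E) : Prop :=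
  G.IsCut F ∧ ∀ F' ⊆ F, G.IsCut F' → F' = F

/-- Number of `s`-bonds of `G`. -/
def bondCount (s : ℕ) : ℕ :=
  ((Finset.univ : Finset (Finset G.E)).filter fun F => F.card = s ∧ G.IsBond F).card

/-- Adjacency of vertices. -/
def Adj (u v : G.V) : Prop :=
  ∃ e : G.E, (G.src e = u ∧ G.tgt e = v) ∨ (G.src e = v ∧ G.tgt e = u)

/-- `G` is simple: no loops and no parallel edges. -/
def IsSimple : Prop :=
  (∀ e : G.E, G.src e ≠ G.tgt e) ∧
    ∀ e f : G.E,
      ((G.src e = G.src f ∧ G.tgt e = G.tgt f) ∨ (G.src e = G.tgt f ∧ G.tgt e = G.src f)) →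
        e = f

end Multigraph

/-- `G ∈ 𝒢_{n,m}`: connected with `n` vertices and `m` edges. -/
def memG (G : Multigraph) (n m : ℕ) : Prop :=
  G.nV = n ∧ G.nE = m ∧ G.Connected

/-- Isomorphism of multigraphs. -/
structure MGIso (G H : Multigraph) where
  vMap : G.V ≃ H.V
  eMap : G.E ≃ H.E
  ends_eq : ∀ e : G.E,
    (H.src (eMap e) = vMap (G.src e) ∧ H.tgt (eMap e) = vMap (G.tgt e)) ∨
    (H.src (eMap e) = vMap (G.tgt e) ∧ H.tgt (eMap e) = vMap (G.src e))

def IsIso (G H : Multigraph) : Prop := Nonempty (MGIso G H)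

/-- `G` is `p`-optimal in `𝒢_{n,m}`. -/
def pOptimal (G : Multigraph) (n m : ℕ) (p : ℝ) : Prop :=
  memG G n m ∧ ∀ H : Multigraph, memG H n m → H.rel p ≤ G.rel p

/-- `G` is uniquely optimal in `𝒢_{n,m}`: strictly more reliable than every
non-isomorphic member, for every `p ∈ (0,1)`. -/
def UniquelyOptimal (G : Multigraph) (n m : ℕ) : Prop :=
  memG G n m ∧ ∀ H : Multigraph, memG H n m → ¬ IsIso G H →
    ∀ p : ℝ, 0 < p → p < 1 → H.rel p < G.rel p

noncomputable instance quotFintype {α : Type} [Fintype α] {r : α → α → Prop} :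
    Fintype (Quot r) :=
  letI := Classical.decEq (Quot r)
  Fintype.ofSurjective (Quot.mk r) fun q => Quot.exists_rep q

/-- Identification of the endpoints of zero-weight edges. -/
def zeroRel (D : Multigraph) (w : D.E → ℕ) : D.V → D.V → Prop :=
  fun u v => ∃ e : D.E, w e = 0 ∧ D.src e = u ∧ D.tgt e = v

/-- The `j`-th node along the chain replacing the edge `e` (whose chain has `w e` edges). -/
def chainNode (D : Multigraph) (w : D.E → ℕ) (e : D.E) (j : ℕ) :
    Quot (zeroRel D w) ⊕ (Σ f : D.E, Fin (w f - 1)) :=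
  if h : 0 < j ∧ j < w e then Sum.inr ⟨e, ⟨j - 1, by omega⟩⟩
  else if j = 0 then Sum.inl (Quot.mk _ (D.src e))
  else Sum.inl (Quot.mk _ (D.tgt e))

/-- The weak subdivision of `D` determined by the chain lengths `w`: each edge `e` is
replaced by a chain with `w e` edges; zero-weight edges are contracted. -/
def subdivide (D : Multigraph) (w : D.E → ℕ) : Multigraph where
  V := Quot (zeroRel D w) ⊕ (Σ f : D.E, Fin (w f - 1))
  E := Σ f : D.E, Fin (w f)
  src f := chainNode D w f.1 f.2.val
  tgt f := chainNode D w f.1 (f.2.val + 1)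

/-- The zero-weight edges contain no cycle (no "zero cycle"): they form a forest. -/
def ZeroAcyclic (D : Multigraph) (w : D.E → ℕ) : Prop :=
  Fintype.card (Quot (zeroRel D w)) +
      (Finset.univ.filter fun e : D.E => w e = 0).card = Fintype.card D.V

/-- `G` is a weak subdivision of `D` with chain lengths `w`. -/
def IsWeakSubdivision (G D : Multigraph) (w : D.E → ℕ) : Prop :=
  ZeroAcyclic D w ∧ IsIso G (subdivide D w)

/-- `D` is a weak distillation of `G`. -/
def IsWeakDistillation (D G : Multigraph) : Prop :=
  ∃ w : D.E → ℕ, IsWeakSubdivision G D w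

/-- The chain lengths differ pairwise by at most one. -/
def BalancedWeights {E : Type} (w : E → ℕ) : Prop := ∀ e f : E, w e ≤ w f + 1

/-- `D ∈ 𝒟_k`: connected, cubic, 3-edge-connected, of exceedance `k`. -/
def memDk (k : ℕ) (D : Multigraph) : Prop :=
  D.Connected ∧ (∀ v : D.V, D.deg v = 3) ∧
    (∀ F : Finset D.E, D.Disconnects F → 3 ≤ F.card) ∧ D.nE = D.nV + k

/-- Identification of the two endpoints of the edge `e`. -/
def contractRel (G : Multigraph) (e : G.E) : G.V → G.V → Prop :=
  fun u v => u = G.src e ∧ v = G.tgt e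

/-- Contraction of the edge `e`. -/
def Multigraph.contract (G : Multigraph) (e : G.E) : Multigraph :=
  letI := Classical.decEq G.E
  { V := Quot (contractRel G e)
    E := {f : G.E // f ≠ e}
    src := fun f => Quot.mk _ (G.src f.1)
    tgt := fun f => Quot.mk _ (G.tgt f.1) }

/-- `G'` is obtained from `G` by shifting an edge: in an intermediate graph `H`
(the expansion of `G` at a vertex by the new edge `e'`), the edges `e, e'` form a
2-bond; contracting `e'` gives back `G`, while contracting `e` gives `G'`. -/
def IsShiftOf (G G' : Multigraph) : Prop :=
  ∃ (H : Multigraph) (e e' : H.E), e ≠ e' ∧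
    H.src e ≠ H.tgt e ∧ H.src e' ≠ H.tgt e' ∧
    H.IsBond {e, e'} ∧
    IsIso (H.contract e') G ∧ IsIso (H.contract e) G'

/-- Equivalence of graphs: repeated edge shifting. -/
def EquivalentGraphs (G G' : Multigraph) : Prop :=
  Relation.ReflTransGen IsShiftOf G G'

/-- `G'` is obtained from `G` by moving the (non-loop) edge `e`: contracting `e` and
expanding a new edge, identified with `e` via `φ`, at an arbitrary vertex.
Equivalently, `G/e` and `G'/φ e` agree, compatibly with the edge identification `φ`. -/
def MovedEdge (G G' : Multigraph) (φ : G.E ≃ G'.E) (e : G.E) : Prop :=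
  G.src e ≠ G.tgt e ∧ G'.src (φ e) ≠ G'.tgt (φ e) ∧
  ∃ ψ : Quot (contractRel G e) ≃ Quot (contractRel G' (φ e)),
    ∀ f : G.E, f ≠ e →
      ((ψ (Quot.mk _ (G.src f)) = Quot.mk _ (G'.src (φ f)) ∧
        ψ (Quot.mk _ (G.tgt f)) = Quot.mk _ (G'.tgt (φ f))) ∨
       (ψ (Quot.mk _ (G.src f)) = Quot.mk _ (G'.tgt (φ f)) ∧
        ψ (Quot.mk _ (G.tgt f)) = Quot.mk _ (G'.src (φ f))))

/-- Move one edge from the chain `a` to the chain `b`. -/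
def moveWeight {E : Type} (w : E → ℕ) (a b : E) : E → ℕ :=
  fun g => if g = b then w b + 1 else if g = a then w a - 1 else w g

/-- The chains of maximal length. -/
def maxChains (D : Multigraph) (w : D.E → ℕ) : Finset D.E :=
  Finset.univ.filter fun e => ∀ f : D.E, w f ≤ w e

/-- The chains of minimal length. -/
def minChains (D : Multigraph) (w : D.E → ℕ) : Finset D.E :=
  Finset.univ.filter fun e => ∀ f : D.E, w e ≤ w f

/-- Degree of `v` within the edge set `S`. -/
def degIn (D : Multigraph) (S : Finset D.E) (v : D.V) : ℕ :=
  (S.filter fun e => D.src e = v).card + (S.filter fun e => D.tgt e = v).card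

/-- `S` is a matching (pairwise non-adjacent edges). -/
def IsMatchingIn (D : Multigraph) (S : Finset D.E) : Prop := ∀ v : D.V, degIn D S v ≤ 1

/-- `S` is a path with three edges. -/
def IsPath3In (D : Multigraph) (S : Finset D.E) : Prop :=
  S.card = 3 ∧ (∀ v : D.V, degIn D S v ≤ 2) ∧
    (Finset.univ.filter fun v : D.V => degIn D S v = 1).card = 2

/-- `S` is the disjoint union of a path with three edges and a single edge. -/
def IsPath3PlusEdgeIn (D : Multigraph) (S : Finset D.E) : Prop :=
  S.card = 4 ∧ (∀ v : D.V, degIn D S v ≤ 2) ∧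
    (Finset.univ.filter fun v : D.V => degIn D S v = 1).card = 4 ∧
    ∃ e ∈ S, degIn D S (D.src e) = 2 ∧ degIn D S (D.tgt e) = 2

/-- `S` is the disjoint union of two paths with two edges each. -/
def IsTwoPlusTwoIn (D : Multigraph) (S : Finset D.E) : Prop :=
  S.card = 4 ∧ (∀ v : D.V, degIn D S v ≤ 2) ∧
    (Finset.univ.filter fun v : D.V => degIn D S v = 1).card = 4 ∧
    ∀ e ∈ S, degIn D S (D.src e) = 1 ∨ degIn D S (D.tgt e) = 1

/-- Two edges sharing a vertex. -/
def AdjEdges (D : Multigraph) (a b : D.E) : Prop :=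
  ∃ v : D.V, (D.src a = v ∨ D.tgt a = v) ∧ (D.src b = v ∨ D.tgt b = v)

/-- The number of incidences of edges of weight `c` at the vertex `u`. -/
def incCount (D : Multigraph) (w : D.E → ℕ) (u : D.V) (c : ℕ) : ℕ :=
  (Finset.univ.filter fun e : D.E => D.src e = u ∧ w e = c).card +
    (Finset.univ.filter fun e : D.E => D.tgt e = u ∧ w e = c).card

/-- The `π^v`-value of the vertex `u`: the number of incident edges of weight `q + 1`
minus the number of incident edges of weight `q - 1`. -/
def piV (D : Multigraph) (w : D.E → ℕ) (q : ℕ) (u : D.V) : ℤ :=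
  (incCount D w u (q + 1) : ℤ) -
    (if q = 0 then 0 else (incCount D w u (q - 1) : ℤ))

/-- The `π^v`-values are balanced: pairwise differences at most one. -/
def BalancedPiV (D : Multigraph) (w : D.E → ℕ) (q : ℕ) : Prop :=
  ∀ u v : D.V, piV D w q u ≤ piV D w q v + 1

/-- The standard weight `q`, where `m = 3kq + r` with `-3k/2 < r ≤ 3k/2`. -/
def stdWeight (m k : ℕ) : ℕ := (2 * m + 3 * k - 1) / (6 * k)

/-- `w` is a balanced weighting of `D` of total size `m` (the implied weak
subdivision is the generic member of `ℬ_m(D)`). -/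
def IsBalancedWeighting (D : Multigraph) (w : D.E → ℕ) (m : ℕ) : Prop :=
  (∑ e : D.E, w e) = m ∧ BalancedWeights w ∧ ZeroAcyclic D w

/-- Every 3-bond of `D` is trivial (consists of the three edges at a single vertex). -/
def OnlyTrivialThreeBonds (D : Multigraph) : Prop :=
  ∀ F : Finset D.E, D.IsBond F → F.card = 3 →
    ∃ u : D.V, F = Finset.univ.filter fun e => D.src e = u ∨ D.tgt e = u

/-- The 3-dipole: two vertices joined by three parallel edges. -/
def dipole3 : Multigraph where
  V := Fin 2
  E := Fin 3
  src _ := 0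
  tgt _ := 1

/-- The complete graph `K₄`. -/
def K4 : Multigraph where
  V := Fin 4
  E := {p : Fin 4 × Fin 4 // p.1 < p.2}
  src p := p.1.1
  tgt p := p.1.2

/-- The complete bipartite graph `K_{3,3}`. -/
def K33 : Multigraph where
  V := Fin 3 ⊕ Fin 3
  E := Fin 3 × Fin 3
  src p := Sum.inl p.1
  tgt p := Sum.inr p.2

/-- The triangular prism `Π₃`; the edges `Sum.inr i` are the rungs. -/
def prism : Multigraph where
  V := Fin 3 × Bool
  E := (Fin 3 × Bool) ⊕ Fin 3
  src := fun e => match e with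
    | Sum.inl (i, b) => (i, b)
    | Sum.inr i => (i, false)
  tgt := fun e => match e with
    | Sum.inl (i, b) => (i + 1, b)
    | Sum.inr i => (i, true)

/-- The Wagner graph (the 4-Möbius ladder): the edges `Sum.inl i` are the rails
(the 8-cycle) and the edges `Sum.inr j` are the rungs. -/
def wagner : Multigraph where
  V := Fin 8
  E := Fin 8 ⊕ Fin 4
  src := fun e => match e with
    | Sum.inl i => i
    | Sum.inr j => ⟨j.val, by omega⟩
  tgt := fun e => match e with
    | Sum.inl i => i + 1
    | Sum.inr j => ⟨j.val + 4, by omega⟩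

/-- The Petersen graph. -/
def petersen : Multigraph where
  V := Fin 5 × Bool
  E := Fin 5 ⊕ Fin 5 ⊕ Fin 5
  src := fun e => match e with
    | Sum.inl i => (i, false)
    | Sum.inr (Sum.inl i) => (i, false)
    | Sum.inr (Sum.inr i) => (i, true)
  tgt := fun e => match e with
    | Sum.inl i => (i + 1, false)
    | Sum.inr (Sum.inl i) => (i, true)
    | Sum.inr (Sum.inr i) => (i + 2, true)


def q3 (a b c d e f g h i : ℕ) : ℕ :=
    a * b * d + a * b * e + a * b * f + a * b * g + a * b * h +
    a * b * i + a * c * d + a * c * e + a * c * f + a * c * g +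
    a * c * h + a * c * i + a * d * e + a * d * f + a * d * h +
    a * d * i + a * e * f + a * e * g + a * e * h + a * e * i +
    a * f * g + a * f * h + a * f * i + a * g * h + a * g * i +
    a * h * i + b * c * d + b * c * e + b * c * f + b * c * g +
    b * c * h + b * c * i + b * d * e + b * d * f + b * d * g +
    b * d * h + b * d * i + b * e * f + b * e * g + b * e * i +
    b * f * g + b * f * h + b * f * i + b * g * h + b * g * i +
    b * h * i + c * d * e + c * d * f + c * d * g + c * d * h +
    c * d * i + c * e * f + c * e * g + c * e * h + c * e * i +
    c * f * g + c * f * h + c * g * h + c * g * i + c * h * i +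
    d * e * g + d * e * h + d * e * i + d * f * g + d * f * h +
    d * f * i + d * g * h + d * g * i + d * h * i + e * f * g +
    e * f * h + e * f * i + e * g * h + e * g * i + e * h * i +
    f * g * h + f * g * i + f * h * i

def q4 (a b c d e f g h i : ℕ) : ℕ :=
    a * b * d * e + a * b * d * f + a * b * d * h + a * b * d * i + a * b * e * f +
    a * b * e * g + a * b * e * i + a * b * f * g + a * b * f * h + a * b * g * h +
    a * b * g * i + a * b * h * i + a * c * d * e + a * c * d * f + a * c * d * h +
    a * c * d * i + a * c * e * f + a * c * e * g + a * c * e * i + a * c * f * g +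
    a * c * f * h + a * c * g * h + a * c * g * i + a * c * h * i + a * d * e * h +
    a * d * e * i + a * d * f * h + a * d * f * i + a * e * f * h + a * e * f * i +
    a * e * g * h + a * e * g * i + a * e * h * i + a * f * g * h + a * f * g * i +
    a * f * h * i + b * c * d * e + b * c * d * f + b * c * d * h + b * c * d * i +
    b * c * e * f + b * c * e * g + b * c * e * i + b * c * f * g + b * c * f * h +
    b * c * g * h + b * c * g * i + b * c * h * i + b * d * e * g + b * d * e * i +
    b * d * f * g + b * d * f * i + b * d * g * h + b * d * g * i + b * d * h * i +
    b * e * f * g + b * e * f * i + b * f * g * h + b * f * g * i + b * f * h * i +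
    c * d * e * g + c * d * e * h + c * d * f * g + c * d * f * h + c * d * g * h +
    c * d * g * i + c * d * h * i + c * e * f * g + c * e * f * h + c * e * g * h +
    c * e * g * i + c * e * h * i + d * e * g * h + d * e * g * i + d * e * h * i +
    d * f * g * h + d * f * g * i + d * f * h * i + e * f * g * h + e * f * g * i +
    e * f * h * i

def p3 (w : Fin 3 × Fin 3 → ℕ) : ℕ :=
  q3 (w (0,0)) (w (0,1)) (w (0,2)) (w (1,0)) (w (1,1)) (w (1,2)) (w (2,0)) (w (2,1)) (w (2,2))

def p4 (w : Fin 3 × Fin 3 → ℕ) : ℕ :=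
  q4 (w (0,0)) (w (0,1)) (w (0,2)) (w (1,0)) (w (1,1)) (w (1,2)) (w (2,0)) (w (2,1)) (w (2,2))

def F3 (d A1 A2 B1 B2 U1 U2 : ℤ) : ℤ :=
  (d - 1) * (A1 + A2 + B1 + B2 + U1 + U2) + A1 * A2 - B1 * B2

def P4 (A1 A2 B1 B2 U1 U2 : ℤ) : ℤ :=
  (A1 + A2) * (B1 + B2) + (A1 + A2) * (U1 + U2) + (B1 + B2) * (U1 + U2)

def F4 (d A1 A2 B1 B2 U1 U2 : ℤ) : ℤ :=
  (d - 1) * P4 A1 A2 B1 B2 U1 U2 + (A1 * A2 - B1 * B2) * (U1 + U2)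
    + A1 * A2 * (B1 + B2) - B1 * B2 * (A1 + A2) + (A1 * B2 - A2 * B1) * (U2 - U1)

lemma q3_01 (a b c d e f g h i : ℕ) : q3 d e f a b c g h i = q3 a b c d e f g h i := by
  unfold q3; ring
lemma q3_12 (a b c d e f g h i : ℕ) : q3 a b c g h i d e f = q3 a b c d e f g h i := by
  unfold q3; ring
lemma q3_tr (a b c d e f g h i : ℕ) : q3 a d g b e h c f i = q3 a b c d e f g h i := by
  unfold q3; ring
lemma q4_01 (a b c d e f g h i : ℕ) : q4 d e f a b c g h i = q4 a b c d e f g h i := by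
  unfold q4; ring
lemma q4_12 (a b c d e f g h i : ℕ) : q4 a b c g h i d e f = q4 a b c d e f g h i := by
  unfold q4; ring
lemma q4_tr (a b c d e f g h i : ℕ) : q4 a d g b e h c f i = q4 a b c d e f g h i := by
  unfold q4; ring

lemma q3_move (a b c d e f g h i : ℕ) :
    (q3 a (b+1) c d e f g h i : ℤ) = q3 (a+1) b c d e f g h i +
      F3 ((a+1) - b) d g e h f i := by
  unfold q3 F3; push_cast; ring
lemma q4_move (a b c d e f g h i : ℕ) :
    (q4 a (b+1) c d e f g h i : ℤ) = q4 (a+1) b c d e f g h i +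
      F4 ((a+1) - b) d g e h f i := by
  unfold q4 F4 P4; push_cast; ring

lemma p3_swap (w : Fin 3 × Fin 3 → ℕ) (i j : Fin 3) :
    p3 (fun p => w (Equiv.swap i j p.1, p.2)) = p3 w := by
  have e1 : Equiv.swap (0 : Fin 3) 1 2 = 2 := by decide
  have e2 : Equiv.swap (1 : Fin 3) 0 2 = 2 := by decide
  have e3 : Equiv.swap (0 : Fin 3) 2 1 = 1 := by decide
  have e4 : Equiv.swap (2 : Fin 3) 0 1 = 1 := by decide
  have e5 : Equiv.swap (1 : Fin 3) 2 0 = 0 := by decide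
  have e6 : Equiv.swap (2 : Fin 3) 1 0 = 0 := by decide
  unfold p3
  fin_cases i <;> fin_cases j <;> simp [e1, e2, e3, e4, e5, e6]
  all_goals first | exact q3_01 .. | exact q3_12 .. | (rw [q3_01, q3_12, q3_01])

lemma p4_swap (w : Fin 3 × Fin 3 → ℕ) (i j : Fin 3) :
    p4 (fun p => w (Equiv.swap i j p.1, p.2)) = p4 w := by
  have e1 : Equiv.swap (0 : Fin 3) 1 2 = 2 := by decide
  have e2 : Equiv.swap (1 : Fin 3) 0 2 = 2 := by decide
  have e3 : Equiv.swap (0 : Fin 3) 2 1 = 1 := by decide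
  have e4 : Equiv.swap (2 : Fin 3) 0 1 = 1 := by decide
  have e5 : Equiv.swap (1 : Fin 3) 2 0 = 0 := by decide
  have e6 : Equiv.swap (2 : Fin 3) 1 0 = 0 := by decide
  unfold p4
  fin_cases i <;> fin_cases j <;> simp [e1, e2, e3, e4, e5, e6]
  all_goals first | exact q4_01 .. | exact q4_12 .. | (rw [q4_01, q4_12, q4_01])

lemma p3_tr (w : Fin 3 × Fin 3 → ℕ) : p3 (fun p => w (p.2, p.1)) = p3 w := q3_tr ..

lemma p4_tr (w : Fin 3 × Fin 3 → ℕ) : p4 (fun p => w (p.2, p.1)) = p4 w := q4_tr ..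

lemma p3_move (w : Fin 3 × Fin 3 → ℕ) (h : 0 < w (0, 0)) :
    (p3 (moveWeight w (0,0) (0,1)) : ℤ) = p3 w +
      F3 (w (0,0) - w (0,1)) (w (1,0)) (w (2,0)) (w (1,1)) (w (2,1)) (w (1,2)) (w (2,2)) := by
  obtain ⟨k, hk⟩ : ∃ k, w (0,0) = k + 1 := ⟨w (0,0) - 1, by omega⟩
  have := q3_move k (w (0,1)) (w (0,2)) (w (1,0)) (w (1,1)) (w (1,2)) (w (2,0)) (w (2,1)) (w (2,2))
  simpa [p3, moveWeight, hk] using this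

lemma p4_move (w : Fin 3 × Fin 3 → ℕ) (h : 0 < w (0, 0)) :
    (p4 (moveWeight w (0,0) (0,1)) : ℤ) = p4 w +
      F4 (w (0,0) - w (0,1)) (w (1,0)) (w (2,0)) (w (1,1)) (w (2,1)) (w (1,2)) (w (2,2)) := by
  obtain ⟨k, hk⟩ : ∃ k, w (0,0) = k + 1 := ⟨w (0,0) - 1, by omega⟩
  have := q4_move k (w (0,1)) (w (0,2)) (w (1,0)) (w (1,1)) (w (1,2)) (w (2,0)) (w (2,1)) (w (2,2))
  simpa [p4, moveWeight, hk] using this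

lemma p3_perm (ρ : Equiv.Perm (Fin 3)) : ∀ w : Fin 3 × Fin 3 → ℕ,
    p3 (fun p => w (ρ p.1, p.2)) = p3 w := by
  induction ρ using Equiv.Perm.swap_induction_on with
  | one => intro w; simp
  | swap_mul f x y _ ih =>
    intro w
    have := ih (fun p => w (Equiv.swap x y p.1, p.2))
    simp only [Equiv.Perm.mul_apply] at *
    rw [this, p3_swap]

lemma p4_perm (ρ : Equiv.Perm (Fin 3)) : ∀ w : Fin 3 × Fin 3 → ℕ,
    p4 (fun p => w (ρ p.1, p.2)) = p4 w := by
  induction ρ using Equiv.Perm.swap_induction_on with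
  | one => intro w; simp
  | swap_mul f x y _ ih =>
    intro w
    have := ih (fun p => w (Equiv.swap x y p.1, p.2))
    simp only [Equiv.Perm.mul_apply] at *
    rw [this, p4_swap]

/-- The good moves. -/
def Good (w : Fin 3 × Fin 3 → ℕ) : Prop :=
  ∃ a b : Fin 3 × Fin 3, a ≠ b ∧ (a.1 = b.1 ∨ a.2 = b.2) ∧ w b < w a ∧
    p3 w < p3 (moveWeight w a b) ∧ p4 w < p4 (moveWeight w a b)

lemma good_row (ρ : Equiv.Perm (Fin 3)) (w : Fin 3 × Fin 3 → ℕ)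
    (h : Good (fun p => w (ρ p.1, p.2))) : Good w := by
  obtain ⟨a, b, hab, hadj, hlt, h3, h4⟩ := h
  have key : moveWeight (fun p => w (ρ p.1, p.2)) a b =
      fun p => moveWeight w (ρ a.1, a.2) (ρ b.1, b.2) (ρ p.1, p.2) := by
    funext p
    simp [moveWeight, Prod.ext_iff]
  rw [key, p3_perm, p3_perm ρ (moveWeight w (ρ a.1, a.2) (ρ b.1, b.2))] at h3
  rw [key, p4_perm, p4_perm ρ (moveWeight w (ρ a.1, a.2) (ρ b.1, b.2))] at h4
  refine ⟨(ρ a.1, a.2), (ρ b.1, b.2), ?_, ?_, hlt, h3, h4⟩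
  · simpa [Prod.ext_iff] using hab
  · simpa using hadj

lemma good_tr (w : Fin 3 × Fin 3 → ℕ)
    (h : Good (fun p => w (p.2, p.1))) : Good w := by
  obtain ⟨a, b, hab, hadj, hlt, h3, h4⟩ := h
  have key : moveWeight (fun p => w (p.2, p.1)) a b =
      fun p => moveWeight w (a.2, a.1) (b.2, b.1) (p.2, p.1) := by
    funext p
    simp [moveWeight, Prod.ext_iff, and_comm]
  rw [key, p3_tr, p3_tr (moveWeight w (a.2, a.1) (b.2, b.1))] at h3
  rw [key, p4_tr, p4_tr (moveWeight w (a.2, a.1) (b.2, b.1))] at h4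
  refine ⟨(a.2, a.1), (b.2, b.1), ?_, ?_, hlt, h3, h4⟩
  · simpa [Prod.ext_iff, and_comm] using hab
  · simpa [or_comm] using hadj

lemma good_perm (ρ σ : Equiv.Perm (Fin 3)) (w : Fin 3 × Fin 3 → ℕ)
    (h : Good (fun p => w (ρ p.1, σ p.2))) : Good w := by
  apply good_tr
  apply good_row σ
  apply good_tr
  exact good_row ρ _ h

lemma good_base (w : Fin 3 × Fin 3 → ℕ) (h : w (0,1) < w (0,0))
    (h3 : 0 < F3 (w (0,0) - w (0,1)) (w (1,0)) (w (2,0)) (w (1,1)) (w (2,1)) (w (1,2)) (w (2,2)))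
    (h4 : 0 < F4 (w (0,0) - w (0,1)) (w (1,0)) (w (2,0)) (w (1,1)) (w (2,1)) (w (1,2)) (w (2,2))) :
    Good w := by
  refine ⟨(0,0), (0,1), by decide, by decide, h, ?_, ?_⟩
  · have := p3_move w (by omega)
    omega
  · have := p4_move w (by omega)
    omega

/-- An affine function nonnegative at both ends of an interval is nonnegative inside. -/
lemma aff_nn (f : ℤ → ℤ) (l u t : ℤ) (hf : ∀ s, f s = f 0 + (f 1 - f 0) * s)
    (h : ∀ s, s = l ∨ s = u → 0 ≤ f s) (hl : l ≤ t) (hu : t ≤ u) :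
    0 ≤ f t := by
  have h1 := h l (Or.inl rfl)
  have h2 := h u (Or.inr rfl)
  rw [hf] at *
  rcases le_total 0 (f 1 - f 0) with h | h <;> nlinarith

/-- Affine in each of the six variables. -/
structure MA (f : ℤ → ℤ → ℤ → ℤ → ℤ → ℤ → ℤ) : Prop where
  h1 : ∀ a b c d e g, f a b c d e g = f 0 b c d e g + (f 1 b c d e g - f 0 b c d e g) * a
  h2 : ∀ a b c d e g, f a b c d e g = f a 0 c d e g + (f a 1 c d e g - f a 0 c d e g) * b
  h3 : ∀ a b c d e g, f a b c d e g = f a b 0 d e g + (f a b 1 d e g - f a b 0 d e g) * c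
  h4 : ∀ a b c d e g, f a b c d e g = f a b c 0 e g + (f a b c 1 e g - f a b c 0 e g) * d
  h5 : ∀ a b c d e g, f a b c d e g = f a b c d 0 g + (f a b c d 1 g - f a b c d 0 g) * e
  h6 : ∀ a b c d e g, f a b c d e g = f a b c d e 0 + (f a b c d e 1 - f a b c d e 0) * g

lemma vertex6 {f : ℤ → ℤ → ℤ → ℤ → ℤ → ℤ → ℤ} (hf : MA f)
    {l1 u1 l2 u2 l3 u3 l4 u4 l5 u5 l6 u6 a b c d e g : ℤ}
    (ha : l1 ≤ a ∧ a ≤ u1) (hb : l2 ≤ b ∧ b ≤ u2) (hc : l3 ≤ c ∧ c ≤ u3)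
    (hd : l4 ≤ d ∧ d ≤ u4) (he : l5 ≤ e ∧ e ≤ u5) (hg : l6 ≤ g ∧ g ≤ u6)
    (h : ∀ a, (a = l1 ∨ a = u1) → ∀ b, (b = l2 ∨ b = u2) → ∀ c, (c = l3 ∨ c = u3) →
      ∀ d, (d = l4 ∨ d = u4) → ∀ e, (e = l5 ∨ e = u5) → ∀ g, (g = l6 ∨ g = u6) →
        0 ≤ f a b c d e g) : 0 ≤ f a b c d e g := by
  refine aff_nn (fun a => f a b c d e g) l1 u1 a (fun s => hf.h1 ..) (fun a' ha' => ?_) ha.1 ha.2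
  refine aff_nn (fun b => f a' b c d e g) l2 u2 b (fun s => hf.h2 ..) (fun b' hb' => ?_) hb.1 hb.2
  refine aff_nn (fun c => f a' b' c d e g) l3 u3 c (fun s => hf.h3 ..) (fun c' hc' => ?_) hc.1 hc.2
  refine aff_nn (fun d => f a' b' c' d e g) l4 u4 d (fun s => hf.h4 ..) (fun d' hd' => ?_) hd.1 hd.2
  refine aff_nn (fun e => f a' b' c' d' e g) l5 u5 e (fun s => hf.h5 ..) (fun e' he' => ?_) he.1 he.2
  exact aff_nn (fun g => f a' b' c' d' e' g) l6 u6 g (fun s => hf.h6 ..)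
    (fun g' hg' => h a' ha' b' hb' c' hc' d' hd' e' he' g' hg') hg.1 hg.2

lemma MA_F3 (d k r : ℤ) : MA (fun a b c e f g => k * F3 d a b c e f g - r) := by
  constructor <;> intros <;> simp only [F3] <;> ring

lemma MA_F4 (d k r : ℤ) : MA (fun a b c e f g => k * F4 d a b c e f g - r) := by
  constructor <;> intros <;> simp only [F4, P4] <;> ring

lemma MA_F3' (d : ℤ) : MA (fun a b c e f g => 3 * F3 d a b c e f g - (a + b + c + e + f + g)) := by
  constructor <;> intros <;> simp only [F3] <;> ring

lemma MA_F4' (d : ℤ) : MA (fun a b c e f g => 5 * F4 d a b c e f g - P4 a b c e f g) := by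
  constructor <;> intros <;> simp only [F4, P4] <;> ring

lemma core1_3 (y k : ℕ) {a b c d e g : ℤ}
    (ha : (y:ℤ) ≤ a ∧ a ≤ y + (k + 3)) (hb : (y:ℤ) ≤ b ∧ b ≤ y + (k + 3))
    (hc : (y:ℤ) ≤ c ∧ c ≤ y + (k + 3)) (hd : (y:ℤ) ≤ d ∧ d ≤ y + (k + 3))
    (he : (y:ℤ) ≤ e ∧ e ≤ y + (k + 3)) (hg : (y:ℤ) ≤ g ∧ g ≤ y + (k + 3)) :
    0 ≤ 3 * F3 (k + 3) a b c d e g - (a + b + c + d + e + g) := by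
  refine vertex6 (MA_F3' (k+3)) ha hb hc hd he hg ?_
  rintro _ (rfl|rfl) _ (rfl|rfl) _ (rfl|rfl) _ (rfl|rfl) _ (rfl|rfl) _ (rfl|rfl) <;>
    (simp only [F3]; ring_nf; positivity)

lemma core1_4 (y k : ℕ) {a b c d e g : ℤ}
    (ha : (y:ℤ) ≤ a ∧ a ≤ y + (k + 3)) (hb : (y:ℤ) ≤ b ∧ b ≤ y + (k + 3))
    (hc : (y:ℤ) ≤ c ∧ c ≤ y + (k + 3)) (hd : (y:ℤ) ≤ d ∧ d ≤ y + (k + 3))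
    (he : (y:ℤ) ≤ e ∧ e ≤ y + (k + 3)) (hg : (y:ℤ) ≤ g ∧ g ≤ y + (k + 3)) :
    0 ≤ 5 * F4 (k + 3) a b c d e g - P4 a b c d e g := by
  refine vertex6 (MA_F4' (k+3)) ha hb hc hd he hg ?_
  rintro _ (rfl|rfl) _ (rfl|rfl) _ (rfl|rfl) _ (rfl|rfl) _ (rfl|rfl) _ (rfl|rfl) <;>
    (simp only [F4, P4]; ring_nf; positivity)

/-- `D = 2`, minimum at least one, one of the `B`s not maximal. -/
lemma core2_3 (y : ℕ) {a b c d e g : ℤ}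
    (ha : (y:ℤ) ≤ a ∧ a ≤ y + 2) (hb : (y:ℤ) ≤ b ∧ b ≤ y + 2)
    (hc : (y:ℤ) ≤ c ∧ c ≤ y + 1) (hd : (y:ℤ) ≤ d ∧ d ≤ y + 2)
    (he : (y:ℤ) ≤ e ∧ e ≤ y + 2) (hg : (y:ℤ) ≤ g ∧ g ≤ y + 2) :
    0 ≤ 3 * F3 2 a b c d e g - (a + b + c + d + e + g) := by
  refine vertex6 (MA_F3' 2) ha hb hc hd he hg ?_
  rintro _ (rfl|rfl) _ (rfl|rfl) _ (rfl|rfl) _ (rfl|rfl) _ (rfl|rfl) _ (rfl|rfl) <;>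
    (simp only [F3]; ring_nf; positivity)

lemma core2_4 (y : ℕ) {a b c d e g : ℤ}
    (ha : (y:ℤ) + 1 ≤ a ∧ a ≤ y + 1 + 2) (hb : (y:ℤ) + 1 ≤ b ∧ b ≤ y + 1 + 2)
    (hc : (y:ℤ) + 1 ≤ c ∧ c ≤ y + 1 + 1) (hd : (y:ℤ) + 1 ≤ d ∧ d ≤ y + 1 + 2)
    (he : (y:ℤ) + 1 ≤ e ∧ e ≤ y + 1 + 2) (hg : (y:ℤ) + 1 ≤ g ∧ g ≤ y + 1 + 2) :
    0 ≤ 1 * F4 2 a b c d e g - 1 := by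
  refine vertex6 (MA_F4 2 1 1) ha hb hc hd he hg ?_
  rintro _ (rfl|rfl) _ (rfl|rfl) _ (rfl|rfl) _ (rfl|rfl) _ (rfl|rfl) _ (rfl|rfl) <;>
    (simp only [F4, P4]; ring_nf; positivity)

lemma core2_4z : ∀ a ∈ Finset.range 3, ∀ b ∈ Finset.range 3, ∀ c ∈ Finset.range 2,
    ∀ d ∈ Finset.range 3, ∀ e ∈ Finset.range 3, ∀ g ∈ Finset.range 3,
      0 < F4 2 (a:ℕ) (b:ℕ) (c:ℕ) (d:ℕ) (e:ℕ) (g:ℕ) ∨ P4 (a:ℕ) (b:ℕ) (c:ℕ) (d:ℕ) (e:ℕ) (g:ℕ) = 0 ∨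
      (a = 2 ∧ b = 0 ∧ c = 1 ∧ d = 2 ∧ e = 2 ∧ g = 0) := by
  unfold F4 P4
  decide +kernel

/-- nonadjacent case, first subcase -/
lemma core4_3 (y n h : ℕ) {b c d e g : ℤ}
    (hb : (y:ℤ) + 1 ≤ b ∧ b ≤ y + n + h + 2) (hc : (y:ℤ) + 1 ≤ c ∧ c ≤ y + 1 + n)
    (hd : (y:ℤ) ≤ d ∧ d ≤ y + 1 + n) (he : (y:ℤ) + 1 ≤ e ∧ e ≤ y + n + h + 2)
    (hg : (y:ℤ) ≤ g ∧ g ≤ y + n + h + 2) :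
    0 ≤ 1 * F3 (n + 1) (y + n + h + 2) b c d e g - 1 := by
  refine vertex6 (MA_F3 (n+1) 1 1) (l1 := y+n+h+2) (u1 := y+n+h+2) ⟨le_rfl, le_rfl⟩ hb hc hd he hg ?_
  rintro _ (rfl|rfl) _ (rfl|rfl) _ (rfl|rfl) _ (rfl|rfl) _ (rfl|rfl) _ (rfl|rfl) <;>
    (simp only [F3]; ring_nf; positivity)

set_option maxHeartbeats 1000000 in
lemma core4_4 (y n h : ℕ) {b c d e g : ℤ}
    (hb : (y:ℤ) + 1 ≤ b ∧ b ≤ y + n + h + 2) (hc : (y:ℤ) + 1 ≤ c ∧ c ≤ y + 1 + n)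
    (hd : (y:ℤ) ≤ d ∧ d ≤ y + 1 + n) (he : (y:ℤ) + 1 ≤ e ∧ e ≤ y + n + h + 2)
    (hg : (y:ℤ) ≤ g ∧ g ≤ y + n + h + 2) :
    0 ≤ 1 * F4 (n + 1) (y + n + h + 2) b c d e g - 1 := by
  refine vertex6 (MA_F4 (n+1) 1 1) (l1 := y+n+h+2) (u1 := y+n+h+2) ⟨le_rfl, le_rfl⟩ hb hc hd he hg ?_
  simp only [or_self]
  rintro _ rfl _ (rfl|rfl) _ (rfl|rfl) _ (rfl|rfl) _ (rfl|rfl) _ (rfl|rfl) <;>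
    (simp only [F4, P4]; ring_nf; positivity)

/-- nonadjacent case, second subcase: `p = y+1+i`, `s = p+j`, `z = s+1+k`, `x = z+1+h` -/
lemma core5_3 (y i j k h : ℕ) {b e g : ℤ}
    (hb : (y:ℤ) + 1 ≤ b ∧ b ≤ y + i + j + k + h + 3)
    (he : (y:ℤ) ≤ e ∧ e ≤ y + i + j + k + h + 2)
    (hg : (y:ℤ) ≤ g ∧ g ≤ y + i + j + k + h + 3) :
    0 ≤ 1 * F3 (j + k + h + 2) (y + 1 + i + j) b y (y + i + j + k + 2) e g - 1 := by
  refine vertex6 (MA_F3 (j+k+h+2) 1 1) (l1 := y+1+i+j) (u1 := y+1+i+j) ⟨le_rfl, le_rfl⟩ hb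
    (l3 := y) (u3 := y) ⟨le_rfl, le_rfl⟩
    (l4 := y+i+j+k+2) (u4 := y+i+j+k+2) ⟨le_rfl, le_rfl⟩ he hg ?_
  simp only [or_self]
  rintro _ rfl _ (rfl|rfl) _ rfl _ rfl _ (rfl|rfl) _ (rfl|rfl) <;>
    (simp only [F3]; ring_nf; positivity)

lemma core5_4 (y i j k h : ℕ) (hi : i ≤ k + h) {b e g : ℤ}
    (hb : (y:ℤ) + 1 ≤ b ∧ b ≤ y + i + j + k + h + 3)
    (he : (y:ℤ) ≤ e ∧ e ≤ y + i + j + k + h + 2)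
    (hg : (y:ℤ) ≤ g ∧ g ≤ y + i + j + k + h + 3) :
    0 ≤ 1 * F4 (j + k + h + 2) (y + 1 + i + j) b y (y + i + j + k + 2) e g - 1 := by
  have h1 : (0:ℤ) ≤ (i ^ 2 + 2 * y * i) * (k + h - i) := by
    apply mul_nonneg (by positivity)
    have : (i:ℤ) ≤ k + h := by exact_mod_cast hi
    linarith
  refine vertex6 (MA_F4 (j+k+h+2) 1 1) (l1 := y+1+i+j) (u1 := y+1+i+j) ⟨le_rfl, le_rfl⟩ hb
    (l3 := y) (u3 := y) ⟨le_rfl, le_rfl⟩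
    (l4 := y+i+j+k+2) (u4 := y+i+j+k+2) ⟨le_rfl, le_rfl⟩ he hg ?_
  simp only [or_self]
  rintro _ rfl _ (rfl|rfl) _ rfl _ rfl _ (rfl|rfl) _ (rfl|rfl) <;>
    first
    | (simp only [F4, P4]; ring_nf; positivity)
    | (refine le_trans h1 (sub_nonneg.mp ?_)
       simp only [F4, P4]; ring_nf; positivity)

/-- `i = k+h+1+l` -/
lemma core6_3 (y j k h l : ℕ) {b e g : ℤ}
    (hb : (y:ℤ) + 1 ≤ b ∧ b ≤ y + (k+h+1+l) + j + k + h + 3)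
    (he : (y:ℤ) + 1 ≤ e ∧ e ≤ y + (k+h+1+l) + j + k + h + 3)
    (hg : (y:ℤ) ≤ g ∧ g ≤ y + (k+h+1+l) + j + k + h + 3) :
    0 ≤ 1 * F3 ((k+h+1+l) + j + 1) (y + (k+h+1+l) + j + k + h + 3) b
      (y + 1 + (k+h+1+l)) (y + (k+h+1+l) + j + k + 2) e g - 1 := by
  refine vertex6 (MA_F3 ((k+h+1+l)+j+1) 1 1) (l1 := y + (k+h+1+l) + j + k + h + 3)
    (u1 := y + (k+h+1+l) + j + k + h + 3) ⟨le_rfl, le_rfl⟩ hb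
    (l3 := y + 1 + (k+h+1+l)) (u3 := y + 1 + (k+h+1+l)) ⟨le_rfl, le_rfl⟩
    (l4 := y+(k+h+1+l)+j+k+2) (u4 := y+(k+h+1+l)+j+k+2) ⟨le_rfl, le_rfl⟩ he hg ?_
  simp only [or_self]
  rintro _ rfl _ (rfl|rfl) _ rfl _ rfl _ (rfl|rfl) _ (rfl|rfl) <;>
    (simp only [F3]; ring_nf; try positivity)

lemma core6_4 (y j k h l : ℕ) {b e g : ℤ}
    (hb : (y:ℤ) + 1 ≤ b ∧ b ≤ y + (k+h+1+l) + j + k + h + 3)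
    (he : (y:ℤ) + 1 ≤ e ∧ e ≤ y + (k+h+1+l) + j + k + h + 3)
    (hg : (y:ℤ) ≤ g ∧ g ≤ y + (k+h+1+l) + j + k + h + 3) :
    0 ≤ 1 * F4 ((k+h+1+l) + j + 1) (y + (k+h+1+l) + j + k + h + 3) b
      (y + 1 + (k+h+1+l)) (y + (k+h+1+l) + j + k + 2) e g - 1 := by
  refine vertex6 (MA_F4 ((k+h+1+l)+j+1) 1 1) (l1 := y + (k+h+1+l) + j + k + h + 3)
    (u1 := y + (k+h+1+l) + j + k + h + 3) ⟨le_rfl, le_rfl⟩ hb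
    (l3 := y + 1 + (k+h+1+l)) (u3 := y + 1 + (k+h+1+l)) ⟨le_rfl, le_rfl⟩
    (l4 := y+(k+h+1+l)+j+k+2) (u4 := y+(k+h+1+l)+j+k+2) ⟨le_rfl, le_rfl⟩ he hg ?_
  simp only [or_self]
  rintro _ rfl _ (rfl|rfl) _ rfl _ rfl _ (rfl|rfl) _ (rfl|rfl) <;>
    (simp only [F4, P4]; ring_nf; try positivity)

lemma perm_ex : ∀ i i1 i2 : Fin 3, i ≠ i1 → i ≠ i2 → i1 ≠ i2 →
    ∃ ρ : Equiv.Perm (Fin 3), ρ 0 = i ∧ ρ 1 = i1 ∧ ρ 2 = i2 := by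
  decide

/-- distinct triples -/
def Dst (i i1 i2 : Fin 3) : Prop := i ≠ i1 ∧ i ≠ i2 ∧ i1 ≠ i2

lemma dst_ex : ∀ i i1 : Fin 3, i ≠ i1 → ∃ i2, Dst i i1 i2 := by
  unfold Dst; decide

lemma good_any (w : Fin 3 × Fin 3 → ℕ) {i i1 i2 j l u : Fin 3} (hi : Dst i i1 i2)
    (hj : Dst j l u) (h : w (i,l) < w (i,j))
    (h3 : 0 < F3 (w (i,j) - w (i,l)) (w (i1,j)) (w (i2,j)) (w (i1,l)) (w (i2,l)) (w (i1,u)) (w (i2,u)))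
    (h4 : 0 < F4 (w (i,j) - w (i,l)) (w (i1,j)) (w (i2,j)) (w (i1,l)) (w (i2,l)) (w (i1,u)) (w (i2,u))) :
    Good w := by
  obtain ⟨ρ, r0, r1, r2⟩ := perm_ex i i1 i2 hi.1 hi.2.1 hi.2.2
  obtain ⟨σ, s0, s1, s2⟩ := perm_ex j l u hj.1 hj.2.1 hj.2.2
  apply good_perm ρ σ
  apply good_base
  · simpa only [r0, r1, r2, s0, s1, s2] using h
  · simpa only [r0, r1, r2, s0, s1, s2] using h3
  · simpa only [r0, r1, r2, s0, s1, s2] using h4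

lemma good_anyT (w : Fin 3 × Fin 3 → ℕ) {i i1 i2 j l u : Fin 3} (hi : Dst i i1 i2)
    (hj : Dst j l u) (h : w (l,i) < w (j,i))
    (h3 : 0 < F3 (w (j,i) - w (l,i)) (w (j,i1)) (w (j,i2)) (w (l,i1)) (w (l,i2)) (w (u,i1)) (w (u,i2)))
    (h4 : 0 < F4 (w (j,i) - w (l,i)) (w (j,i1)) (w (j,i2)) (w (l,i1)) (w (l,i2)) (w (u,i1)) (w (u,i2))) :
    Good w :=
  good_tr w (good_any (fun p => w (p.2, p.1)) hi hj h h3 h4)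

/-- no zero 4-cycle -/
def NZ (w : Fin 3 × Fin 3 → ℕ) : Prop :=
  ∀ i k j l, i ≠ k → j ≠ l → ¬ (w (i,j) = 0 ∧ w (i,l) = 0 ∧ w (k,j) = 0 ∧ w (k,l) = 0)

lemma NZ_tr {w : Fin 3 × Fin 3 → ℕ} (h : NZ w) : NZ (fun p => w (p.2, p.1)) := by
  intro i k j l hik hjl ⟨h1, h2, h3, h4⟩
  exact h j l i k hjl hik ⟨h1, h3, h2, h4⟩

lemma P4_pos {w : Fin 3 × Fin 3 → ℕ} (hw : NZ w) {i i1 i2 j l u : Fin 3} (hi : Dst i i1 i2)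
    (hj : Dst j l u) :
    0 < P4 (w (i1,j)) (w (i2,j)) (w (i1,l)) (w (i2,l)) (w (i1,u)) (w (i2,u)) ∧
    (0:ℤ) < w (i1,j) + w (i2,j) + w (i1,l) + w (i2,l) + w (i1,u) + w (i2,u) := by
  have a1 := hw i1 i2 j l hi.2.2 hj.1
  have a2 := hw i1 i2 j u hi.2.2 hj.2.1
  have a3 := hw i1 i2 l u hi.2.2 hj.2.2
  constructor
  · have : 0 < (w (i1,j) + w (i2,j)) * (w (i1,l) + w (i2,l)) + (w (i1,j) + w (i2,j)) * (w (i1,u) + w (i2,u))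
      + (w (i1,l) + w (i2,l)) * (w (i1,u) + w (i2,u)) := by
      by_contra hh
      have h0 : ∀ a b : ℕ, a * b = 0 → a = 0 ∨ b = 0 := fun a b h => Nat.mul_eq_zero.mp h
      have b1 := h0 (w (i1,j) + w (i2,j)) (w (i1,l) + w (i2,l)) (by omega)
      have b2 := h0 (w (i1,j) + w (i2,j)) (w (i1,u) + w (i2,u)) (by omega)
      have b3 := h0 (w (i1,l) + w (i2,l)) (w (i1,u) + w (i2,u)) (by omega)
      omega
    unfold P4
    exact_mod_cast this
  · omega

lemma caseD3 {w : Fin 3 × Fin 3 → ℕ} (hw : NZ w) {i j l : Fin 3} (hj : j ≠ l)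
    (hmin : ∀ p, w (i,l) ≤ w p) (hmax : ∀ p, w p ≤ w (i,j)) (hD : w (i,l) + 3 ≤ w (i,j)) :
    Good w := by
  obtain ⟨u, hu⟩ := dst_ex j l hj
  obtain ⟨i1, hi1⟩ : ∃ i1, i ≠ i1 := by clear hmin hmax hD; revert i; decide
  obtain ⟨i2, hi⟩ := dst_ex i i1 hi1
  obtain ⟨k, hk⟩ : ∃ k, w (i,j) = w (i,l) + (k + 3) := ⟨w (i,j) - w (i,l) - 3, by omega⟩
  have hb : ∀ p, ((w (i,l) : ℕ) : ℤ) ≤ w p ∧ (w p : ℤ) ≤ (w (i,l) : ℕ) + (k + 3) := by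
    intro p
    have := hmin p
    have := hmax p
    omega
  have hd : (w (i,j) : ℤ) - w (i,l) = k + 3 := by rw [hk]; push_cast; ring
  obtain ⟨h4, h3⟩ := P4_pos hw hi hu
  have c3 := core1_3 (w (i,l)) k (hb (i1,j)) (hb (i2,j)) (hb (i1,l)) (hb (i2,l)) (hb (i1,u)) (hb (i2,u))
  have c4 := core1_4 (w (i,l)) k (hb (i1,j)) (hb (i2,j)) (hb (i1,l)) (hb (i2,l)) (hb (i1,u)) (hb (i2,u))
  refine good_any w hi hu (by omega) ?_ ?_ <;> rw [hd] <;> linarith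

lemma case2base {w : Fin 3 × Fin 3 → ℕ} (hw : NZ w) {i k j l : Fin 3} (hj : j ≠ l) (hk : i ≠ k)
    (hmin : ∀ p, w (i,l) ≤ w p) (hmax : ∀ p, w p ≤ w (i,j)) (hD : w (i,j) = w (i,l) + 2)
    (hkl : w (k,l) ≤ w (i,l) + 1) : Good w := by
  obtain ⟨u, hu⟩ := dst_ex j l hj
  obtain ⟨i2, hi⟩ := dst_ex i k hk
  have hb : ∀ p, ((w (i,l) : ℕ) : ℤ) ≤ w p ∧ (w p : ℤ) ≤ (w (i,l) : ℕ) + 2 := by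
    intro p
    have := hmin p
    have := hmax p
    omega
  have hd : (w (i,j) : ℤ) - w (i,l) = 2 := by rw [hD]; push_cast; ring
  obtain ⟨h4, h3⟩ := P4_pos hw hi hu
  have c3 := core2_3 (w (i,l)) (hb (k,j)) (hb (i2,j)) ⟨(hb (k,l)).1, by omega⟩ (hb (i2,l)) (hb (k,u)) (hb (i2,u))
  have g3 : 0 < F3 (w (i,j) - w (i,l)) (w (k,j)) (w (i2,j)) (w (k,l)) (w (i2,l)) (w (k,u)) (w (i2,u)) := by
    rw [hd]; linarith
  rcases Nat.eq_zero_or_pos (w (i,l)) with h0 | h0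
  · have hr : ∀ p, w p ∈ Finset.range 3 := by
      intro p; have := hmax p; rw [Finset.mem_range]; omega
    rcases core2_4z _ (hr (k,j)) _ (hr (i2,j)) (w (k,l)) (by rw [Finset.mem_range]; omega) _ (hr (i2,l))
      _ (hr (k,u)) _ (hr (i2,u)) with h | h | h
    · exact good_any w hi hu (by omega) g3 (by rw [hd]; exact h)
    · omega
    · -- the exceptional matrix
      obtain ⟨a1, a2, a3, a4, a5, a6⟩ := h
      have hu0 := hb (i,u)
      refine good_anyT w (i := j) (i1 := l) (i2 := u) (j := i) (l := i2) (u := k) hu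
        ⟨hi.2.1, hi.1, hi.2.2.symm⟩ (by omega) ?_ ?_
      · rw [hD, a2, a3, a4, a5, a6, h0]; unfold F3; push_cast; nlinarith
      · rw [hD, a2, a3, a4, a5, a6, h0]; unfold F4 P4; push_cast; nlinarith
  · obtain ⟨y, hy⟩ : ∃ y, w (i,l) = y + 1 := ⟨w (i,l) - 1, by omega⟩
    have hb' : ∀ p, (y:ℤ) + 1 ≤ w p ∧ (w p : ℤ) ≤ y + 1 + 2 := by
      intro p; have := hb p; omega
    have c4 := core2_4 y (hb' (k,j)) (hb' (i2,j)) ⟨(hb' (k,l)).1, by omega⟩ (hb' (i2,l)) (hb' (k,u)) (hb' (i2,u))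
    exact good_any w hi hu (by omega) g3 (by rw [hd]; linarith)

lemma col2 {w : Fin 3 × Fin 3 → ℕ} (hw : NZ w) (hG : ¬ Good w) {y : ℕ}
    (hmin : ∀ p, y ≤ w p) (hmax : ∀ p, w p ≤ y + 2) (i k j l : Fin 3) (hj : j ≠ l) (hk : i ≠ k)
    (h1 : w (i,j) = y + 2) (h2 : w (i,l) = y) : w (k,l) = y + 2 := by
  by_contra h
  have := hmax (k,l)
  exact hG (case2base hw hj hk (by simpa [h2] using hmin) (by simpa [h1] using hmax) (by omega) (by omega))

lemma row2 {w : Fin 3 × Fin 3 → ℕ} (hw : NZ w) (hG : ¬ Good w) {y : ℕ}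
    (hmin : ∀ p, y ≤ w p) (hmax : ∀ p, w p ≤ y + 2) (i k j l : Fin 3) (hj : j ≠ l) (hk : i ≠ k)
    (h1 : w (j,i) = y + 2) (h2 : w (l,i) = y) : w (l,k) = y + 2 :=
  col2 (w := fun p => w (p.2, p.1)) (NZ_tr hw) (fun h => hG (good_tr w h))
    (fun _ => hmin _) (fun _ => hmax _) i k j l hj hk h1 h2

lemma core3 (y : ℕ) {A1 A2 U1 U2 : ℕ} (bA1 : y ≤ A1 ∧ A1 ≤ y + 2) (bA2 : y ≤ A2 ∧ A2 ≤ y + 2)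
    (bU1 : y ≤ U1 ∧ U1 ≤ y + 2) (bU2 : y ≤ U2 ∧ U2 ≤ y + 2)
    (h1 : A1 = y → A2 = y + 2 ∧ U1 = y + 2) (h2 : A2 = y → A1 = y + 2 ∧ U2 = y + 2)
    (h3 : U1 = y → A1 = y + 2 ∧ U2 = y + 2) (h4 : U2 = y → A2 = y + 2 ∧ U1 = y + 2) :
    (0 < F3 2 A1 A2 (y+2) (y+2) U1 U2 ∧ 0 < F3 2 U1 U2 (y+2) (y+2) A1 A2 ∧
     0 < F3 2 A1 U1 (y+2) (y+2) A2 U2 ∧ 0 < F3 2 A2 U2 (y+2) (y+2) A1 U1) ∧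
    0 < F4 2 A1 A2 (y+2) (y+2) U1 U2 + F4 2 U1 U2 (y+2) (y+2) A1 A2 +
     F4 2 A1 U1 (y+2) (y+2) A2 U2 + F4 2 A2 U2 (y+2) (y+2) A1 U1 := by
  have t : ∀ a : ℕ, y ≤ a ∧ a ≤ y + 2 → a = y ∨ a = y + 1 ∨ a = y + 2 := by omega
  have u1 := t _ bA1
  have u2 := t _ bA2
  have u3 := t _ bU1
  have u4 := t _ bU2
  clear t bA1 bA2 bU1 bU2
  rcases u1 with u1 | u1 | u1 <;> rcases u2 with u2 | u2 | u2 <;>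
  rcases u3 with u3 | u3 | u3 <;> rcases u4 with u4 | u4 | u4 <;>
    first
    | (exfalso; omega)
    | (subst u1 u2 u3 u4
       clear h1 h2 h3 h4
       simp only [F3, F4, P4]
       push_cast
       refine ⟨⟨?_, ?_, ?_, ?_⟩, ?_⟩ <;> (ring_nf; positivity))

lemma Dst.swap {i j k : Fin 3} (h : Dst i j k) : Dst k j i := ⟨h.2.2.symm, h.2.1.symm, h.1.symm⟩

lemma caseD2 {w : Fin 3 × Fin 3 → ℕ} (hw : NZ w) {i j l : Fin 3} (hj : j ≠ l)
    (hmin : ∀ p, w (i,l) ≤ w p) (hmax : ∀ p, w p ≤ w (i,j)) (hD : w (i,j) = w (i,l) + 2) :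
    Good w := by
  by_contra hG
  obtain ⟨u, hu⟩ := dst_ex j l hj
  obtain ⟨i1, hi1⟩ : ∃ i1, i ≠ i1 := by clear hmin hmax hD; revert i; decide
  obtain ⟨i2, hi⟩ := dst_ex i i1 hi1
  obtain ⟨y, hy⟩ : ∃ y, w (i,l) = y := ⟨_, rfl⟩
  rw [hy] at hmin hD
  rw [hD] at hmax
  obtain ⟨j1, j2, j3⟩ := hu
  obtain ⟨k1, k2, k3⟩ := hi
  have C := col2 hw hG hmin hmax
  have R := row2 hw hG hmin hmax
  have e1 := C i i1 j l j1 k1 hD hy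
  have e2 := C i i2 j l j1 k2 hD hy
  have e3 := R l u i1 i k1.symm j3 e1 hy
  obtain ⟨⟨f1, f2, f3, f4⟩, f5⟩ := core3 y (A1 := w (i1,j)) (A2 := w (i2,j)) (U1 := w (i1,u)) (U2 := w (i2,u))
    ⟨hmin _, hmax _⟩ ⟨hmin _, hmax _⟩ ⟨hmin _, hmax _⟩ ⟨hmin _, hmax _⟩
    (fun h => ⟨C i1 i2 l j j1.symm k3 e1 h, R j u i i1 k1 j2 hD h⟩)
    (fun h => ⟨C i2 i1 l j j1.symm k3.symm e2 h, R j u i i2 k2 j2 hD h⟩)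
    (fun h => ⟨R u j i i1 k1 j2.symm e3 h, C i1 i2 l u j3 k3 e1 h⟩)
    (fun h => ⟨R u j i i2 k2 j2.symm e3 h, C i2 i1 l u j3 k3.symm e2 h⟩)
  have z : (((y + 2 : ℕ) : ℤ) - (y : ℤ)) = 2 := by push_cast; ring
  have z' : ((y + 2 : ℕ) : ℤ) = (y : ℤ) + 2 := by push_cast; ring
  have g1 : ¬ 0 < F4 2 (w (i1,j)) (w (i2,j)) (y+2) (y+2) (w (i1,u)) (w (i2,u)) := fun h =>
    hG (good_any w (i := i) (i1 := i1) (i2 := i2) (j := j) (l := l) (u := u)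
      ⟨k1, k2, k3⟩ ⟨j1, j2, j3⟩ (by omega)
      (by rw [hD, hy, z, e1, e2, z']; exact f1) (by rw [hD, hy, z, e1, e2, z']; exact h))
  have g2 : ¬ 0 < F4 2 (w (i1,u)) (w (i2,u)) (y+2) (y+2) (w (i1,j)) (w (i2,j)) := fun h =>
    hG (good_any w (i := i) (i1 := i1) (i2 := i2) (j := u) (l := l) (u := j)
      ⟨k1, k2, k3⟩ ⟨j3.symm, j2.symm, j1.symm⟩ (by omega)
      (by rw [e3, hy, z, e1, e2, z']; exact f2) (by rw [e3, hy, z, e1, e2, z']; exact h))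
  have g3 : ¬ 0 < F4 2 (w (i1,j)) (w (i1,u)) (y+2) (y+2) (w (i2,j)) (w (i2,u)) := fun h =>
    hG (good_anyT w (i := l) (i1 := j) (i2 := u) (j := i1) (l := i) (u := i2)
      ⟨j1.symm, j3, j2⟩ ⟨k1.symm, k3, k2⟩ (by omega)
      (by rw [e1, hy, z, hD, e3, z']; exact f3) (by rw [e1, hy, z, hD, e3, z']; exact h))
  have g4 : ¬ 0 < F4 2 (w (i2,j)) (w (i2,u)) (y+2) (y+2) (w (i1,j)) (w (i1,u)) := fun h =>
    hG (good_anyT w (i := l) (i1 := j) (i2 := u) (j := i2) (l := i) (u := i1)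
      ⟨j1.symm, j3, j2⟩ ⟨k2.symm, k3.symm, k1⟩ (by omega)
      (by rw [e2, hy, z, hD, e3, z']; exact f4) (by rw [e2, hy, z, hD, e3, z']; exact h))
  linarith

lemma caseAdj {w : Fin 3 × Fin 3 → ℕ} (hw : NZ w) {i j l : Fin 3}
    (hmin : ∀ p, w (i,l) ≤ w p) (hmax : ∀ p, w p ≤ w (i,j)) (hD : w (i,l) + 2 ≤ w (i,j)) :
    Good w := by
  have hj : j ≠ l := by rintro rfl; omega
  rcases Nat.lt_or_ge (w (i,l) + 2) (w (i,j)) with h | h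
  · exact caseD3 hw hj hmin hmax h
  · exact caseD2 hw hj hmin hmax (by omega)

/-- The non-adjacent case. -/
lemma caseNon {w : Fin 3 × Fin 3 → ℕ} {i k m j l u : Fin 3} (hi : Dst i k m) (hj : Dst j l u)
    (hmin : ∀ p, w (k,l) ≤ w p) (hmax : ∀ p, w p ≤ w (i,j))
    (hp : w (k,l) < w (i,l)) (hs : w (k,l) < w (k,j)) (hp' : w (i,l) < w (i,j))
    (hs' : w (k,j) < w (i,j))
    (hv : w (k,l) < w (m,j)) (hr : w (k,l) < w (i,u)) (hz : w (m,l) < w (i,j))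
    (ht : w (k,u) < w (i,j)) (hps : w (i,l) ≤ w (k,j)) : Good w := by
  obtain ⟨i1, i2, i3⟩ := hi
  have hx := hmax
  have a1 := hmax (m,j)
  have a2 := hmax (i,u)
  have a3 := hmax (m,u)
  have a4 := hmin (m,l)
  have a5 := hmin (k,u)
  have a6 := hmin (m,u)
  clear hx hmin hmax
  generalize hy : w (k,l) = y at *
  rcases Nat.lt_or_ge (w (k,j)) (w (m,l)) with hzs | hzs
  · obtain ⟨I, hI⟩ : ∃ I, w (i,l) = y + 1 + I := ⟨w (i,l) - y - 1, by omega⟩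
    obtain ⟨J, hJ⟩ : ∃ J, w (k,j) = y + 1 + I + J := ⟨w (k,j) - w (i,l), by omega⟩
    obtain ⟨K, hK⟩ : ∃ K, w (m,l) = y + I + J + K + 2 := ⟨w (m,l) - w (k,j) - 1, by omega⟩
    obtain ⟨H, hH⟩ : ∃ H, w (i,j) = y + I + J + K + H + 3 := ⟨w (i,j) - w (m,l) - 1, by omega⟩
    rcases Nat.lt_or_ge (K + H) I with hI2 | hI2
    · obtain ⟨L, rfl⟩ : ∃ L, I = K + H + 1 + L := ⟨I - (K + H + 1), by omega⟩
      have c3 := core6_3 y J K H L (b := w (m,j)) (e := w (i,u)) (g := w (m,u))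
        (by omega) (by omega) (by omega)
      have c4 := core6_4 y J K H L (b := w (m,j)) (e := w (i,u)) (g := w (m,u))
        (by omega) (by omega) (by omega)
      have hd : (w (k,j) : ℤ) - w (k,l) = (K + H + 1 + L) + J + 1 := by
        rw [hJ, hy]; push_cast; ring
      refine good_any w (i := k) (i1 := i) (i2 := m) (j := j) (l := l) (u := u)
        ⟨i1.symm, i3, i2⟩ hj (by omega) ?_ ?_
      · rw [hd, hH, hI, hK]; push_cast; linarith
      · rw [hd, hH, hI, hK]; push_cast; linarith
    · have c3 := core5_3 y I J K H (b := w (m,j)) (e := w (k,u)) (g := w (m,u))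
        (by omega) (by omega) (by omega)
      have c4 := core5_4 y I J K H hI2 (b := w (m,j)) (e := w (k,u)) (g := w (m,u))
        (by omega) (by omega) (by omega)
      have hd : (w (i,j) : ℤ) - w (i,l) = J + K + H + 2 := by
        rw [hI, hH]; push_cast; ring
      refine good_any w (i := i) (i1 := k) (i2 := m) (j := j) (l := l) (u := u)
        ⟨i1, i2, i3⟩ hj (by omega) ?_ ?_
      · rw [hd, hJ, hy, hK]; push_cast; linarith
      · rw [hd, hJ, hy, hK]; push_cast; linarith
  · obtain ⟨N, hN⟩ : ∃ N, w (k,j) = y + 1 + N := ⟨w (k,j) - y - 1, by omega⟩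
    obtain ⟨H, hH⟩ : ∃ H, w (i,j) = y + N + H + 2 := ⟨w (i,j) - w (k,j) - 1, by omega⟩
    have c3 := core4_3 y N H (b := w (m,j)) (c := w (i,l)) (d := w (m,l)) (e := w (i,u)) (g := w (m,u))
      (by omega) (by omega) (by omega) (by omega) (by omega)
    have c4 := core4_4 y N H (b := w (m,j)) (c := w (i,l)) (d := w (m,l)) (e := w (i,u)) (g := w (m,u))
      (by omega) (by omega) (by omega) (by omega) (by omega)
    have hd : (w (k,j) : ℤ) - w (k,l) = N + 1 := by
      rw [hN, hy]; push_cast; ring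
    refine good_any w (i := k) (i1 := i) (i2 := m) (j := j) (l := l) (u := u)
      ⟨i1.symm, i3, i2⟩ hj (by omega) ?_ ?_
    · rw [hd, hH]; push_cast; linarith
    · rw [hd, hH]; push_cast; linarith

theorem alg_main (w : Fin 3 × Fin 3 → ℕ) (hw : NZ w) (hb : ¬ BalancedWeights w) : Good w := by
  obtain ⟨⟨i, j⟩, hmax⟩ := Finite.exists_max w
  obtain ⟨⟨k, l⟩, hmin⟩ := Finite.exists_min w
  have hD : w (k,l) + 2 ≤ w (i,j) := by
    unfold BalancedWeights at hb
    push Not at hb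
    obtain ⟨e, f, h⟩ := hb
    have := hmax e
    have := hmin f
    omega
  by_contra hG
  have R : ∀ i' j' l', ¬ (w (i',j') = w (i,j) ∧ w (i',l') = w (k,l)) := by
    rintro i' j' l' ⟨h1, h2⟩
    exact hG (caseAdj hw (i := i') (j := j') (l := l') (by simpa [h2] using hmin)
      (by simpa [h1] using hmax) (by omega))
  have C : ∀ i' j' l', ¬ (w (j',i') = w (i,j) ∧ w (l',i') = w (k,l)) := by
    rintro i' j' l' ⟨h1, h2⟩
    exact hG (good_tr w (caseAdj (w := fun p => w (p.2, p.1)) (NZ_tr hw) (i := i') (j := j') (l := l')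
      (by simpa [h2] using fun a b => hmin (b, a))
      (by simpa [h1] using fun a b => hmax (b, a)) (by simp only; omega)))
  have hik : i ≠ k := by rintro rfl; exact R _ _ _ ⟨rfl, rfl⟩
  have hjl : j ≠ l := by rintro rfl; exact C _ _ _ ⟨rfl, rfl⟩
  obtain ⟨m, hm⟩ := dst_ex i k hik
  obtain ⟨u, hu⟩ := dst_ex j l hjl
  have r1 := R i j l
  have r2 := R k j l
  have r3 := R i j u
  have r4 := R k u l
  have c1 := C j i m
  have c2 := C l m k
  have c3 := C l i k
  have c4 := C j i k
  have b1 := hmin (i,l)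
  have b2 := hmin (k,j)
  have b3 := hmin (m,j)
  have b4 := hmin (i,u)
  have b5 := hmax (i,l)
  have b6 := hmax (k,j)
  have b7 := hmax (m,l)
  have b8 := hmax (k,u)
  rcases le_total (w (i,l)) (w (k,j)) with h | h
  · exact hG (caseNon hm hu hmin hmax (by omega) (by omega) (by omega) (by omega) (by omega)
      (by omega) (by omega) (by omega) h)
  · exact hG (good_tr w (caseNon (w := fun p => w (p.2, p.1)) hu hm (fun _ => hmin _) (fun _ => hmax _)
      (by simp only; omega) (by simp only; omega) (by simp only; omega) (by simp only; omega)
      (by simp only; omega) (by simp only; omega) (by simp only; omega) (by simp only; omega) h))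

lemma conn_iff (G : Multigraph) (S : Finset G.E) : G.ConnOn S ↔
    ∀ f : G.V → Prop, (∀ e ∈ S, (f (G.src e) ↔ f (G.tgt e))) → ∀ u v, f u → f v := by
  constructor
  · intro h f hf u v hu
    induction h u v with
    | refl => exact hu
    | tail _ hs ih =>
      obtain ⟨e, he, ⟨rfl, rfl⟩ | ⟨rfl, rfl⟩⟩ := hs
      · exact (hf e he).1 ih
      · exact (hf e he).2 ih
  · intro h u v
    refine h (fun x => Relation.ReflTransGen (G.stepOn S) u x) ?_ u v Relation.ReflTransGen.refl
    intro e he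
    exact ⟨fun hx => hx.tail ⟨e, he, Or.inl ⟨rfl, rfl⟩⟩, fun hx => hx.tail ⟨e, he, Or.inr ⟨rfl, rfl⟩⟩⟩

section
variable {D : Multigraph} {w : D.E → ℕ}

lemma chainNode_zero (e : D.E) : chainNode D w e 0 = Sum.inl (Quot.mk _ (D.src e)) := by
  simp [chainNode]

lemma chainNode_last (e : D.E) (h : 0 < w e) :
    chainNode D w e (w e) = Sum.inl (Quot.mk _ (D.tgt e)) := by
  simp [chainNode, h.ne']

lemma chainNode_mid (e : D.E) (i : Fin (w e - 1)) :
    chainNode D w e (i.val + 1) = Sum.inr ⟨e, i⟩ := by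
  have : i.val + 1 < w e := by omega
  simp [chainNode, this]

lemma chain_walk (F : Finset (Σ f : D.E, Fin (w f)))
    (f : Quot (zeroRel D w) ⊕ (Σ f : D.E, Fin (w f - 1)) → Prop)
    (hf : ∀ x : (Σ f : D.E, Fin (w f)), x ∉ F →
      (f (chainNode D w x.1 x.2.val) ↔ f (chainNode D w x.1 (x.2.val + 1))))
    (e : D.E) (a b : ℕ) (hab : a ≤ b) (hb : b ≤ w e)
    (hF : ∀ k : Fin (w e), a ≤ k.val → k.val < b → (⟨e, k⟩ : Σ f : D.E, Fin (w f)) ∉ F) :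
    f (chainNode D w e a) ↔ f (chainNode D w e b) := by
  induction b, hab using Nat.le_induction with
  | base => rfl
  | succ b hab ih =>
    rw [ih (by omega) (fun k h1 h2 => hF k h1 (by omega))]
    exact hf ⟨e, ⟨b, hb⟩⟩ (hF ⟨b, hb⟩ hab (by simp))

variable (D w) in
/-- The subdivision stays connected after deleting `F`. -/
def CS (F : Finset (Σ f : D.E, Fin (w f))) : Prop :=
  (subdivide D w).ConnOn ((Finset.univ \ F : Finset (subdivide D w).E))

lemma conn_sub (F : Finset (Σ f : D.E, Fin (w f))) :
    CS D w F ↔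
      (∀ x ∈ F, ∀ y ∈ F, x.1 = y.1 → x = y) ∧ D.ConnOn (Finset.univ \ F.image Sigma.fst) := by
  unfold CS
  constructor
  · intro hc
    rw [conn_iff] at hc
    refine ⟨?_, ?_⟩
    · by_contra hne
      push Not at hne
      have : ∃ (e : D.E) (k l : Fin (w e)), k.val < l.val ∧ (⟨e, k⟩ : Σ f : D.E, Fin (w f)) ∈ F ∧
          (⟨e, l⟩ : Σ f : D.E, Fin (w f)) ∈ F := by
        obtain ⟨⟨e, k⟩, hx, ⟨e', l⟩, hy, h1, h2⟩ := hne
        obtain rfl : e = e' := h1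
        have : k ≠ l := by rintro rfl; exact h2 rfl
        rcases lt_or_gt_of_ne (fun h => this (Fin.ext h) : k.val ≠ l.val) with h | h
        · exact ⟨e, k, l, h, hx, hy⟩
        · exact ⟨e, l, k, h, hy, hx⟩
      obtain ⟨e, k, l, hkl, hk, hl⟩ := this
      let f : Quot (zeroRel D w) ⊕ (Σ f : D.E, Fin (w f - 1)) → Prop := fun v =>
        ∃ j, k.val < j ∧ j ≤ l.val ∧ v = chainNode D w e j
      have hl' := l.2
      have key : ∀ (e' : D.E) (j : ℕ), j ≤ w e' → (f (chainNode D w e' j) ↔ e' = e ∧ k.val < j ∧ j ≤ l.val) := by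
        intro e' j hj
        constructor
        · rintro ⟨j', h1, h2, h3⟩
          rw [show j' = (j' - 1) + 1 by omega, chainNode_mid e ⟨j' - 1, by omega⟩] at h3
          unfold chainNode at h3
          split_ifs at h3 with h4
          have h5 := Sum.inr.inj h3
          obtain rfl : e' = e := congrArg Sigma.fst h5
          have h6 : j - 1 = j' - 1 := by
            have := eq_of_heq (Sigma.mk.inj h5).2
            exact congrArg Fin.val this
          exact ⟨rfl, by omega, by omega⟩
        · rintro ⟨rfl, h1, h2⟩
          exact ⟨j, h1, h2, rfl⟩
      have h1 : f (chainNode D w e l.val) := (key e _ (by omega)).2 ⟨rfl, hkl, le_rfl⟩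
      have h2 : ¬ f (chainNode D w e 0) := by
        rw [key e 0 (by omega)]; omega
      refine h2 (hc f ?_ _ _ h1)
      rintro ⟨e', i⟩ hi
      have hi' : (⟨e', i⟩ : Σ f : D.E, Fin (w f)) ∉ F := (Finset.mem_sdiff.1 hi).2
      have hi2 := i.2
      show f (chainNode D w e' i.val) ↔ f (chainNode D w e' (i.val + 1))
      rw [key _ _ (by omega), key _ _ (by omega)]
      by_cases hee : e' = e
      · subst hee
        have n1 : i.val ≠ k.val := fun h => hi' (by rw [Fin.ext h]; exact hk)
        have n2 : i.val ≠ l.val := fun h => hi' (by rw [Fin.ext h]; exact hl)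
        simp only [true_and]
        omega
      · simp [hee]
    · rw [conn_iff]
      intro h hh u v hu
      have hz : ∀ a b, zeroRel D w a b → h a = h b := by
        rintro a b ⟨e, he, rfl, rfl⟩
        apply propext
        apply hh
        simp only [Finset.mem_sdiff, Finset.mem_univ, true_and, Finset.mem_image, not_exists, not_and]
        rintro ⟨e', k⟩ _ rfl
        have := k.2
        simp only at he
        omega
      let f : Quot (zeroRel D w) ⊕ (Σ f : D.E, Fin (w f - 1)) → Prop := fun x => match x with
        | Sum.inl q => Quot.lift h hz q
        | Sum.inr ⟨e, i⟩ => if ∃ k : Fin (w e), k.val ≤ i.val ∧ (⟨e, k⟩ : Σ f : D.E, Fin (w f)) ∈ F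
            then h (D.tgt e) else h (D.src e)
      refine hc f ?_ (Sum.inl (Quot.mk _ u)) (Sum.inl (Quot.mk _ v)) hu
      have key : ∀ (e : D.E) (j : ℕ), 0 < w e → j ≤ w e → (f (chainNode D w e j) ↔
          if ∃ k : Fin (w e), k.val < j ∧ (⟨e, k⟩ : Σ f : D.E, Fin (w f)) ∈ F
            then h (D.tgt e) else h (D.src e)) := by
        intro e j he hj
        rcases Nat.eq_zero_or_pos j with rfl | hj0
        · rw [chainNode_zero]
          simp [f]
        · rcases Nat.lt_or_ge j (w e) with hjw | hjw
          · obtain ⟨i, rfl⟩ : ∃ i, j = i + 1 := ⟨j - 1, by omega⟩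
            rw [chainNode_mid e ⟨i, by omega⟩]
            simp [f]
          · obtain rfl : j = w e := by omega
            rw [chainNode_last e he]
            split_ifs with hx
            · rfl
            · show h (D.tgt e) ↔ h (D.src e)
              symm
              apply hh
              simp only [Finset.mem_sdiff, Finset.mem_univ, true_and, Finset.mem_image, not_exists, not_and]
              rintro ⟨e', k⟩ hk rfl
              exact hx ⟨k, k.2, hk⟩
      rintro ⟨e, i⟩ hi
      have hi' : (⟨e, i⟩ : Σ f : D.E, Fin (w f)) ∉ F := (Finset.mem_sdiff.1 hi).2
      have hi2 := i.2
      show f (chainNode D w e i.val) ↔ f (chainNode D w e (i.val + 1))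
      rw [key _ _ (by omega) (by omega), key _ _ (by omega) (by omega)]
      have : (∃ k : Fin (w e), k.val < i.val ∧ (⟨e, k⟩ : Σ f : D.E, Fin (w f)) ∈ F) ↔
          (∃ k : Fin (w e), k.val < i.val + 1 ∧ (⟨e, k⟩ : Σ f : D.E, Fin (w f)) ∈ F) := by
        constructor
        · rintro ⟨k, h1, h2⟩; exact ⟨k, by omega, h2⟩
        · rintro ⟨k, h1, h2⟩
          refine ⟨k, ?_, h2⟩
          have : k.val ≠ i.val := fun h => hi' (by rw [← Fin.ext h]; exact h2)
          omega
      rw [if_congr this rfl rfl]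
  · rintro ⟨hinj, hc⟩
    rw [conn_iff] at hc ⊢
    intro f hf
    have hf' : ∀ x : (Σ f : D.E, Fin (w f)), x ∉ F →
      (f (chainNode D w x.1 x.2.val) ↔ f (chainNode D w x.1 (x.2.val + 1))) :=
      fun x hx => hf x (Finset.mem_sdiff.2 ⟨Finset.mem_univ _, hx⟩)
    have walk := chain_walk F f hf'
    have hh : ∀ u v, f (Sum.inl (Quot.mk _ u)) → f (Sum.inl (Quot.mk _ v)) := by
      apply hc (fun v => f (Sum.inl (Quot.mk _ v)))
      intro e he
      have he' : ∀ k : Fin (w e), (⟨e, k⟩ : Σ f : D.E, Fin (w f)) ∉ F := by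
        intro k hk
        exact (Finset.mem_sdiff.1 he).2 (Finset.mem_image.2 ⟨_, hk, rfl⟩)
      rcases Nat.eq_zero_or_pos (w e) with h0 | h0
      · have : (Quot.mk (zeroRel D w) (D.src e)) = Quot.mk _ (D.tgt e) := Quot.sound ⟨e, h0, rfl, rfl⟩
        simp only [this]
      · have := walk e 0 (w e) (by omega) le_rfl (fun k _ _ => he' k)
        rwa [chainNode_zero, chainNode_last e h0] at this
    have hv : ∀ x, ∃ v, (f x ↔ f (Sum.inl (Quot.mk _ v))) := by
      rintro (q | ⟨e, i⟩)
      · obtain ⟨v, rfl⟩ := Quot.exists_rep q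
        exact ⟨v, Iff.rfl⟩
      · have hi := i.2
        rw [← chainNode_mid]
        by_cases hx : ∃ k : Fin (w e), k.val < i.val + 1 ∧ (⟨e, k⟩ : Σ f : D.E, Fin (w f)) ∈ F
        · obtain ⟨k, hk1, hk2⟩ := hx
          refine ⟨D.tgt e, ?_⟩
          rw [walk e (i.val + 1) (w e) (by omega) le_rfl, chainNode_last e (by omega)]
          intro k' h1 h2 h3
          have := hinj _ hk2 _ h3 rfl
          have := eq_of_heq (Sigma.mk.inj this).2
          subst this
          omega
        · refine ⟨D.src e, ?_⟩
          rw [← walk e 0 (i.val + 1) (by omega) (by omega), chainNode_zero]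
          intro k _ h2 h3
          exact hx ⟨k, h2, h3⟩
    intro u v hu
    obtain ⟨u', hu'⟩ := hv u
    obtain ⟨v', hv'⟩ := hv v
    exact hv'.2 (hh u' v' (hu'.1 hu))

lemma card_fiber (T : Finset D.E) :
    ((Finset.univ : Finset (Finset (Σ f : D.E, Fin (w f)))).filter fun F =>
      (∀ x ∈ F, ∀ y ∈ F, x.1 = y.1 → x = y) ∧ F.image Sigma.fst = T).card = ∏ e ∈ T, w e := by
  have : (T.pi (fun e => (Finset.univ : Finset (Fin (w e))))).card = ∏ e ∈ T, w e := by
    rw [Finset.card_pi]; simp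
  rw [← this]
  symm
  apply Finset.card_bij (fun g _ => T.attach.image (fun e => (⟨e.1, g e.1 e.2⟩ : Σ f : D.E, Fin (w f))))
  · intro g _
    simp only [Finset.mem_filter, Finset.mem_univ, true_and]
    constructor
    · intro x hx y hy hxy
      obtain ⟨⟨e, he⟩, _, rfl⟩ := Finset.mem_image.1 hx
      obtain ⟨⟨e', he'⟩, _, rfl⟩ := Finset.mem_image.1 hy
      obtain rfl : e = e' := hxy
      rfl
    · ext e
      simp
  · intro g _ g' _ h
    funext e he
    have : (⟨e, g e he⟩ : Σ f : D.E, Fin (w f)) ∈ T.attach.image (fun e => (⟨e.1, g' e.1 e.2⟩ : Σ f : D.E, Fin (w f))) := by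
      rw [← h]
      exact Finset.mem_image.2 ⟨⟨e, he⟩, Finset.mem_attach _ _, rfl⟩
    obtain ⟨⟨e', he'⟩, _, h2⟩ := Finset.mem_image.1 this
    obtain rfl : e' = e := congrArg Sigma.fst h2
    exact (eq_of_heq (Sigma.mk.inj h2).2).symm
  · intro F hF
    simp only [Finset.mem_filter, Finset.mem_univ, true_and] at hF
    obtain ⟨h1, rfl⟩ := hF
    have h3 : ∀ e ∈ F.image Sigma.fst, ∃ k : Fin (w e), (⟨e, k⟩ : Σ f : D.E, Fin (w f)) ∈ F := by
      intro e he
      obtain ⟨⟨e', k⟩, hx, rfl⟩ := Finset.mem_image.1 he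
      exact ⟨k, hx⟩
    choose g hg using h3
    refine ⟨g, by simp, ?_⟩
    ext ⟨e, k⟩
    constructor
    · intro h
      obtain ⟨⟨e', he'⟩, _, h2⟩ := Finset.mem_image.1 h
      rw [← h2]
      exact hg _ _
    · intro h
      have he : e ∈ F.image Sigma.fst := Finset.mem_image.2 ⟨_, h, rfl⟩
      have := h1 _ h _ (hg e he) rfl
      rw [this]
      exact Finset.mem_image.2 ⟨⟨e, he⟩, Finset.mem_attach _ _, rfl⟩

lemma card_conn (i : ℕ) :
    ((Finset.univ : Finset (Finset (Σ f : D.E, Fin (w f)))).filter fun F =>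
      F.card = i ∧ CS D w F).card =
    ∑ T ∈ ((Finset.univ : Finset (Finset D.E)).filter fun T => T.card = i ∧ D.ConnOn (Finset.univ \ T)),
      ∏ e ∈ T, w e := by
  rw [Finset.card_eq_sum_card_fiberwise (f := fun F => F.image Sigma.fst)
    (t := (Finset.univ : Finset (Finset D.E)).filter fun T => T.card = i ∧ D.ConnOn (Finset.univ \ T))]
  · apply Finset.sum_congr rfl
    intro T hT
    simp only [Finset.mem_filter, Finset.mem_univ, true_and] at hT
    rw [← card_fiber T, Finset.filter_filter]
    congr 1
    ext F
    simp only [Finset.mem_filter, Finset.mem_univ, true_and]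
    constructor
    · rintro ⟨⟨h1, h2⟩, h3⟩
      exact ⟨((conn_sub F).1 h2).1, h3⟩
    · rintro ⟨h1, h2⟩
      refine ⟨⟨?_, (conn_sub F).2 ⟨h1, by rw [h2]; exact hT.2⟩⟩, h2⟩
      rw [← hT.1, ← h2, Finset.card_image_of_injOn]
      intro x hx y hy
      exact h1 x hx y hy
  · intro F hF
    rw [Finset.mem_coe, Finset.mem_filter] at hF ⊢
    replace hF := hF.2
    refine ⟨Finset.mem_univ _, ?_⟩
    obtain ⟨h1, h2⟩ := (conn_sub F).1 hF.2
    refine ⟨?_, h2⟩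
    rw [← hF.1, Finset.card_image_of_injOn]
    intro x hx y hy
    exact h1 x hx y hy

lemma d_add (i : ℕ) : (subdivide D w).d i +
    ∑ T ∈ ((Finset.univ : Finset (Finset D.E)).filter fun T => T.card = i ∧ D.ConnOn (Finset.univ \ T)),
      ∏ e ∈ T, w e = (∑ e, w e).choose i := by
  rw [← card_conn]
  have h1 : ((Finset.univ : Finset (Finset (Σ f : D.E, Fin (w f)))).filter fun F => F.card = i).card
      = (∑ e, w e).choose i := by
    have : ((Finset.univ : Finset (Finset (Σ f : D.E, Fin (w f)))).filter fun F => F.card = i)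
      = Finset.powersetCard i Finset.univ := by
      ext F; simp [Finset.mem_powersetCard]
    rw [this, Finset.card_powersetCard, Finset.card_univ, Fintype.card_sigma]
    simp
  rw [← h1]
  have := Finset.card_filter_add_card_filter_not (s := (Finset.univ : Finset (Finset (Σ f : D.E, Fin (w f)))).filter fun F => F.card = i)
    (fun F => CS D w F)
  rw [Finset.filter_filter, Finset.filter_filter] at this
  have h2 : (subdivide D w).d i = ((Finset.univ : Finset (Finset (Σ f : D.E, Fin (w f)))).filter fun F =>
      F.card = i ∧ ¬ CS D w F).card := by
    have h3 : ∀ F : Finset (Σ f : D.E, Fin (w f)), (F.card = i ∧ ¬ CS D w F) →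
        F ∈ ((Finset.univ : Finset (Finset (Σ f : D.E, Fin (w f)))).filter fun F =>
      F.card = i ∧ ¬ CS D w F) := by
      intro F h
      rw [Finset.mem_filter]
      exact ⟨Finset.mem_univ _, h⟩
    refine Finset.card_bij (fun F _ => F) (fun F h => ?_) (fun _ _ _ _ h => h)
      (fun F h => ⟨F, ?_, rfl⟩)
    · have h' := (Finset.mem_filter.1 h).2
      exact h3 F h'
    · rw [Finset.mem_filter] at h
      exact Finset.mem_filter.2 ⟨Finset.mem_univ _, h.2⟩
  rw [← this, add_comm, h2]

end

lemma iso_d {G H : Multigraph} (φ : MGIso G H) (i : ℕ) : H.d i = G.d i := by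
  have conn : ∀ S : Finset G.E, G.ConnOn S ↔ H.ConnOn (S.map φ.eMap.toEmbedding) := by
    intro S
    rw [conn_iff, conn_iff]
    constructor
    · intro h f hf u v hu
      have := h (fun x => f (φ.vMap x)) (by
        intro e he
        have h1 := hf (φ.eMap e) (Finset.mem_map_of_mem _ he)
        rcases φ.ends_eq e with ⟨h2, h3⟩ | ⟨h2, h3⟩ <;> rw [h2, h3] at h1
        · exact h1
        · exact h1.symm) (φ.vMap.symm u) (φ.vMap.symm v) (by simpa using hu)
      simpa using this
    · intro h f hf u v hu
      have := h (fun x => f (φ.vMap.symm x)) (by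
        intro e he
        obtain ⟨e, he1, rfl⟩ := Finset.mem_map.1 he
        have h1 := hf e he1
        rcases φ.ends_eq e with ⟨h2, h3⟩ | ⟨h2, h3⟩ <;> simp only [Equiv.coe_toEmbedding, h2, h3, Equiv.symm_apply_apply]
        · exact h1
        · exact h1.symm) (φ.vMap u) (φ.vMap v) (by simpa using hu)
      simpa using this
  unfold Multigraph.d
  symm
  apply Finset.card_bij (fun F _ => F.map φ.eMap.toEmbedding)
  · intro F hF
    simp only [Finset.mem_filter, Finset.mem_univ, true_and, Finset.card_map] at hF ⊢
    refine ⟨hF.1, fun h => hF.2 ?_⟩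
    rw [conn]
    convert h using 1
    ext e
    simp [Finset.mem_map_equiv]
  · intro F _ F' _ h
    exact Finset.map_injective _ h
  · intro F hF
    simp only [Finset.mem_filter, Finset.mem_univ, true_and] at hF
    refine ⟨F.map φ.eMap.symm.toEmbedding, ?_, ?_⟩
    · simp only [Finset.mem_filter, Finset.mem_univ, true_and, Finset.card_map]
      refine ⟨hF.1, fun h => hF.2 ?_⟩
      rw [conn] at h
      convert h using 1
      ext e
      simp [Finset.mem_map_equiv]
    · ext e; simp [Finset.mem_map_equiv]

/-- the nine edges of K33 -/
def cell : Fin 9 → Fin 3 × Fin 3 :=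
  ![(0,0), (0,1), (0,2), (1,0), (1,1), (1,2), (2,0), (2,1), (2,2)]

/-- Three-element edge sets of K33 whose removal leaves it connected. -/
def goodL3 : List (List (Fin 9)) :=
  [[0,1,3], [0,1,4], [0,1,5], [0,1,6], [0,1,7], [0,1,8], [0,2,3], [0,2,4],
   [0,2,5], [0,2,6], [0,2,7], [0,2,8], [0,3,4], [0,3,5], [0,3,7], [0,3,8],
   [0,4,5], [0,4,6], [0,4,7], [0,4,8], [0,5,6], [0,5,7], [0,5,8], [0,6,7],
   [0,6,8], [0,7,8], [1,2,3], [1,2,4], [1,2,5], [1,2,6], [1,2,7], [1,2,8],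
   [1,3,4], [1,3,5], [1,3,6], [1,3,7], [1,3,8], [1,4,5], [1,4,6], [1,4,8],
   [1,5,6], [1,5,7], [1,5,8], [1,6,7], [1,6,8], [1,7,8], [2,3,4], [2,3,5],
   [2,3,6], [2,3,7], [2,3,8], [2,4,5], [2,4,6], [2,4,7], [2,4,8], [2,5,6],
   [2,5,7], [2,6,7], [2,6,8], [2,7,8], [3,4,6], [3,4,7], [3,4,8], [3,5,6],
   [3,5,7], [3,5,8], [3,6,7], [3,6,8], [3,7,8], [4,5,6], [4,5,7], [4,5,8],
   [4,6,7], [4,6,8], [4,7,8], [5,6,7], [5,6,8], [5,7,8]]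

/-- All two-element edge sets. -/
def goodL2 : List (List (Fin 9)) :=
  [[0,1], [0,2], [0,3], [0,4], [0,5], [0,6], [0,7], [0,8],
   [1,2], [1,3], [1,4], [1,5], [1,6], [1,7], [1,8], [2,3],
   [2,4], [2,5], [2,6], [2,7], [2,8], [3,4], [3,5], [3,6],
   [3,7], [3,8], [4,5], [4,6], [4,7], [4,8], [5,6], [5,7],
   [5,8], [6,7], [6,8], [7,8]]

/-- Four-element edge sets of K33 whose removal leaves it connected. -/
def goodL4 : List (List (Fin 9)) :=
  [[0,1,3,4], [0,1,3,5], [0,1,3,7], [0,1,3,8], [0,1,4,5], [0,1,4,6], [0,1,4,8], [0,1,5,6],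
   [0,1,5,7], [0,1,6,7], [0,1,6,8], [0,1,7,8], [0,2,3,4], [0,2,3,5], [0,2,3,7], [0,2,3,8],
   [0,2,4,5], [0,2,4,6], [0,2,4,8], [0,2,5,6], [0,2,5,7], [0,2,6,7], [0,2,6,8], [0,2,7,8],
   [0,3,4,7], [0,3,4,8], [0,3,5,7], [0,3,5,8], [0,4,5,7], [0,4,5,8], [0,4,6,7], [0,4,6,8],
   [0,4,7,8], [0,5,6,7], [0,5,6,8], [0,5,7,8], [1,2,3,4], [1,2,3,5], [1,2,3,7], [1,2,3,8],
   [1,2,4,5], [1,2,4,6], [1,2,4,8], [1,2,5,6], [1,2,5,7], [1,2,6,7], [1,2,6,8], [1,2,7,8],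
   [1,3,4,6], [1,3,4,8], [1,3,5,6], [1,3,5,8], [1,3,6,7], [1,3,6,8], [1,3,7,8], [1,4,5,6],
   [1,4,5,8], [1,5,6,7], [1,5,6,8], [1,5,7,8], [2,3,4,6], [2,3,4,7], [2,3,5,6], [2,3,5,7],
   [2,3,6,7], [2,3,6,8], [2,3,7,8], [2,4,5,6], [2,4,5,7], [2,4,6,7], [2,4,6,8], [2,4,7,8],
   [3,4,6,7], [3,4,6,8], [3,4,7,8], [3,5,6,7], [3,5,6,8], [3,5,7,8], [4,5,6,7], [4,5,6,8],
   [4,5,7,8]]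

/-- Decidable connectedness of K33 minus T. -/
def KC (T : Finset (Fin 3 × Fin 3)) : Prop :=
  ∀ f h : Fin 3 → Bool, (∀ p : Fin 3 × Fin 3, p ∈ T ∨ f p.1 = h p.2) → ∀ i j, f i = h j

instance : DecidablePred KC := fun T => by unfold KC; infer_instance

lemma KC_iff (T : Finset K33.E) : K33.ConnOn (Finset.univ \ T) ↔ KC T := by
  rw [conn_iff]
  constructor
  · intro H f h hfh i j
    have key := H (fun v => Sum.elim f h v = true) (by
      intro e he
      have := (hfh e).resolve_left (Finset.mem_sdiff.1 he).2
      show f e.1 = true ↔ h e.2 = true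
      rw [this])
    have k1 := key (Sum.inl i) (Sum.inr j)
    have k2 := key (Sum.inr j) (Sum.inl i)
    simp only [Sum.elim_inl, Sum.elim_inr] at k1 k2
    exact Bool.eq_iff_iff.2 ⟨k1, k2⟩
  · intro H f hf u v hu
    have := H (fun i => decide (f (Sum.inl i))) (fun j => decide (f (Sum.inr j))) (by
      intro p
      by_cases hp : p ∈ T
      · exact Or.inl hp
      · right
        have := hf p (Finset.mem_sdiff.2 ⟨Finset.mem_univ _, hp⟩)
        exact decide_eq_decide.2 this)
    have h2 : ∀ i j, (f (Sum.inl i) ↔ f (Sum.inr j)) := fun i j => decide_eq_decide.1 (this i j)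
    rcases u with u | u <;> rcases v with v | v
    · exact (h2 v 0).2 ((h2 u 0).1 hu)
    · exact (h2 u v).1 hu
    · exact (h2 v u).2 hu
    · exact (h2 0 v).1 ((h2 0 u).2 hu)

/-- the list of sets -/
def sets (L : List (List (Fin 9))) : List (Finset (Fin 3 × Fin 3)) :=
  L.map fun l => (l.map cell).toFinset

lemma sets3 : ∀ T : Finset (Fin 3 × Fin 3), (T.card = 3 ∧ KC T) ↔ T ∈ sets goodL3 := by
  decide +kernel

lemma sets4 : ∀ T : Finset (Fin 3 × Fin 3), (T.card = 4 ∧ KC T) ↔ T ∈ sets goodL4 := by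
  decide +kernel

lemma sets2 : ∀ T : Finset (Fin 3 × Fin 3), (T.card = 2 ∧ KC T) ↔ T ∈ sets goodL2 := by
  decide +kernel

lemma nod2 : (sets goodL2).Nodup := by decide +kernel
lemma nod2' : ∀ l ∈ goodL2, (l.map cell).Nodup := by decide +kernel
lemma nod3 : (sets goodL3).Nodup := by decide +kernel
lemma nod4 : (sets goodL4).Nodup := by decide +kernel
lemma nod3' : ∀ l ∈ goodL3, (l.map cell).Nodup := by decide +kernel
lemma nod4' : ∀ l ∈ goodL4, (l.map cell).Nodup := by decide +kernel

lemma sum_sets (L : List (List (Fin 9))) (h1 : (sets L).Nodup) (h2 : ∀ l ∈ L, (l.map cell).Nodup)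
    (S : Finset (Finset (Fin 3 × Fin 3))) (hS : ∀ T, T ∈ S ↔ T ∈ sets L) (w : Fin 3 × Fin 3 → ℕ) :
    ∑ T ∈ S, ∏ e ∈ T, w e = (L.map fun l => ((l.map cell).map w).prod).sum := by
  have : S = (sets L).toFinset := by ext T; rw [hS, List.mem_toFinset]
  rw [this, List.sum_toFinset _ h1, sets, List.map_map]
  congr 1
  apply List.map_congr_left
  intro l hl
  exact List.prod_toFinset _ (h2 l hl)

lemma mem_k (k : ℕ) (T : Finset K33.E) :
    T ∈ ((Finset.univ : Finset (Finset K33.E)).filter fun T => T.card = k ∧ K33.ConnOn (Finset.univ \ T)) ↔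
      (T.card = k ∧ KC T) := by
  rw [Finset.mem_filter]
  exact ⟨fun h => ⟨h.2.1, (KC_iff T).1 h.2.2⟩, fun h => ⟨Finset.mem_univ _, h.1, (KC_iff T).2 h.2⟩⟩

/-- evaluation of the list of weights -/
def ev (x : Fin 9 → ℕ) (L : List (List (Fin 9))) : ℕ := (L.map fun l => (l.map x).prod).sum

lemma ev_cell (w : Fin 3 × Fin 3 → ℕ) (L : List (List (Fin 9))) :
    (L.map fun l => ((l.map cell).map w).prod).sum = ev (fun i => w (cell i)) L := by
  unfold ev
  congr 1
  apply List.map_congr_left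
  intro l _
  rw [List.map_map]; rfl

set_option maxHeartbeats 2000000 in
lemma ev3 (x : Fin 9 → ℕ) : ev x goodL3 = q3 (x 0) (x 1) (x 2) (x 3) (x 4) (x 5) (x 6) (x 7) (x 8) := by
  simp only [ev, goodL3, q3, List.map_cons, List.map_nil, List.sum_cons, List.prod_cons,
    List.sum_nil, List.prod_nil, mul_one, add_zero]
  ring

set_option maxHeartbeats 2000000 in
lemma ev4 (x : Fin 9 → ℕ) : ev x goodL4 = q4 (x 0) (x 1) (x 2) (x 3) (x 4) (x 5) (x 6) (x 7) (x 8) := by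
  simp only [ev, goodL4, q4, List.map_cons, List.map_nil, List.sum_cons, List.prod_cons,
    List.sum_nil, List.prod_nil, mul_one, add_zero]
  ring

set_option maxHeartbeats 2000000 in
lemma ev2 (x : Fin 9 → ℕ) : 2 * ev x goodL2 + (x 0 ^ 2 + x 1 ^ 2 + x 2 ^ 2 + (x 3 ^ 2 + x 4 ^ 2 + x 5 ^ 2)
     + (x 6 ^ 2 + x 7 ^ 2 + x 8 ^ 2)) =
    (x 0 + x 1 + x 2 + (x 3 + x 4 + x 5) + (x 6 + x 7 + x 8)) ^ 2 := by
  simp only [ev, goodL2, List.map_cons, List.map_nil, List.sum_cons, List.prod_cons,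
    List.sum_nil, List.prod_nil, mul_one, add_zero]
  ring

lemma c3_eq (w : Fin 3 × Fin 3 → ℕ) :
    ∑ T ∈ ((Finset.univ : Finset (Finset K33.E)).filter fun T => T.card = 3 ∧ K33.ConnOn (Finset.univ \ T)),
      ∏ e ∈ T, w e = p3 w :=
  (sum_sets goodL3 nod3 nod3' _ (fun T => (mem_k 3 T).trans (sets3 T)) w).trans
    ((ev_cell w _).trans (ev3 _))

lemma c4_eq (w : Fin 3 × Fin 3 → ℕ) :
    ∑ T ∈ ((Finset.univ : Finset (Finset K33.E)).filter fun T => T.card = 4 ∧ K33.ConnOn (Finset.univ \ T)),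
      ∏ e ∈ T, w e = p4 w :=
  (sum_sets goodL4 nod4 nod4' _ (fun T => (mem_k 4 T).trans (sets4 T)) w).trans
    ((ev_cell w _).trans (ev4 _))

lemma c2_eq (w : Fin 3 × Fin 3 → ℕ) :
    2 * ∑ T ∈ ((Finset.univ : Finset (Finset K33.E)).filter fun T => T.card = 2 ∧ K33.ConnOn (Finset.univ \ T)),
      ∏ e ∈ T, w e + ∑ e, w e ^ 2 = (∑ e, w e) ^ 2 := by
  have h := sum_sets goodL2 nod2 nod2' ((Finset.univ : Finset (Finset K33.E)).filter fun T => T.card = 2 ∧ K33.ConnOn (Finset.univ \ T)) (fun T => (mem_k 2 T).trans (sets2 T)) w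
  refine (congrArg (fun t => 2 * t + ∑ e, w e ^ 2) (h.trans (ev_cell w _))).trans ?_
  simp only [Fintype.sum_prod_type, Fin.sum_univ_three]
  exact ev2 _

lemma move_eq {E : Type} (w : E → ℕ) (a b : E) (hab : a ≠ b) (ha : 0 < w a) (g : E) :
    (moveWeight w a b g : ℤ) = w g + (if g = b then 1 else 0) - (if g = a then 1 else 0) := by
  unfold moveWeight
  split_ifs with h1 h2 h2
  · exact absurd (h2.symm.trans h1) hab
  · subst h1; push_cast; ring
  · subst h2; omega
  · ring

lemma move_sum {E : Type} [Fintype E] (w : E → ℕ) (a b : E) (hab : a ≠ b) (ha : 0 < w a) :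
    ∑ g, moveWeight w a b g = ∑ g, w g := by
  have : ((∑ g, moveWeight w a b g : ℕ) : ℤ) = ((∑ g, w g : ℕ) : ℤ) := by
    push_cast
    simp only [move_eq w a b hab ha, Finset.sum_sub_distrib, Finset.sum_add_distrib]
    simp
  exact_mod_cast this

lemma move_sq {E : Type} [Fintype E] (w : E → ℕ) (a b : E) (hab : a ≠ b) (hlt : w b < w a) :
    ∑ g, moveWeight w a b g ^ 2 ≤ ∑ g, w g ^ 2 := by
  have h : ∀ g, ((moveWeight w a b g : ℤ)) ^ 2 = (w g : ℤ) ^ 2 + (if g = b then 2 * (w b : ℤ) + 1 else 0)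
      + (if g = a then 1 - 2 * (w a : ℤ) else 0) := by
    intro g
    rw [move_eq w a b hab (by omega)]
    split_ifs with h1 h2 h2
    · exact absurd (h2.symm.trans h1) hab
    · subst h1; ring
    · subst h2; ring
    · ring
  have : ((∑ g, moveWeight w a b g ^ 2 : ℕ) : ℤ) ≤ ((∑ g, w g ^ 2 : ℕ) : ℤ) := by
    push_cast
    simp only [h, Finset.sum_add_distrib]
    simp
    omega
  exact_mod_cast this

/-- identification of end points of edges in `Z` -/
def qrel (D : Multigraph) (Z : Finset D.E) : D.V → D.V → Prop :=
  fun u v => ∃ e ∈ Z, D.src e = u ∧ D.tgt e = v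

/-- number of classes -/
def qn (D : Multigraph) (Z : Finset D.E) : ℕ := Nat.card (Quot (qrel D Z))

lemma qn_step (D : Multigraph) (Z : Finset D.E) (e : D.E) : qn D Z ≤ qn D (insert e Z) + 1 := by
  have hr : ∀ a b, qrel D (insert e Z) a b →
      (if Quot.mk (qrel D Z) a = Quot.mk _ (D.tgt e) then Quot.mk (qrel D Z) (D.src e) else Quot.mk _ a) =
      (if Quot.mk (qrel D Z) b = Quot.mk _ (D.tgt e) then Quot.mk (qrel D Z) (D.src e) else Quot.mk _ b) := by
    rintro a b ⟨e', he', rfl, rfl⟩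
    rcases Finset.mem_insert.1 he' with rfl | h
    · rw [if_pos (rfl : Quot.mk (qrel D Z) (D.tgt e') = _)]
      split_ifs <;> rfl
    · have : Quot.mk (qrel D Z) (D.src e') = Quot.mk _ (D.tgt e') := Quot.sound ⟨e', h, rfl, rfl⟩
      rw [this]
  let F : Option (Quot (qrel D (insert e Z))) → Quot (qrel D Z) := fun o =>
    o.elim (Quot.mk _ (D.tgt e)) (Quot.lift _ hr)
  have hF : Function.Surjective F := by
    intro q
    obtain ⟨v, rfl⟩ := Quot.exists_rep q
    by_cases h : Quot.mk (qrel D Z) v = Quot.mk _ (D.tgt e)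
    · exact ⟨none, h.symm⟩
    · exact ⟨some (Quot.mk _ v), if_neg h⟩
  have := Nat.card_le_card_of_surjective F hF
  rwa [Finite.card_option] at this

lemma qn_mono (D : Multigraph) {Z Z' : Finset D.E} (h : Z ⊆ Z') :
    qn D Z + Z.card ≤ qn D Z' + Z'.card := by
  have key : ∀ W : Finset D.E, Disjoint W Z → qn D Z + Z.card ≤ qn D (W ∪ Z) + (W ∪ Z).card := by
    intro W
    induction W using Finset.induction_on with
    | empty => intro _; simp
    | insert e W he ih =>
      intro hd
      rw [Finset.disjoint_insert_left] at hd
      have h1 := ih hd.2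
      have h2 := qn_step D (W ∪ Z) e
      rw [Finset.insert_union, Finset.card_insert_of_notMem (by simp [he, hd.1])]
      omega
  have := key (Z' \ Z) Finset.sdiff_disjoint
  rwa [Finset.sdiff_union_of_subset h] at this

lemma zero_iff (D : Multigraph) (w : D.E → ℕ) : ZeroAcyclic D w ↔
    qn D (Finset.univ.filter fun e => w e = 0) + (Finset.univ.filter fun e : D.E => w e = 0).card
      = Fintype.card D.V := by
  unfold ZeroAcyclic qn
  have : qrel D (Finset.univ.filter fun e => w e = 0) = zeroRel D w := by
    funext u v
    simp [qrel, zeroRel]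
  rw [this, Nat.card_eq_fintype_card]

lemma qn_empty (D : Multigraph) : qn D ∅ = Fintype.card D.V := by
  unfold qn
  rw [← Nat.card_eq_fintype_card]
  refine (Nat.card_congr (Equiv.ofBijective (Quot.mk _) ⟨?_, fun q => Quot.exists_rep q⟩)).symm
  intro a b h
  have := congrArg (Quot.lift (r := qrel D ∅) id (by rintro a b ⟨e, he, _⟩; simp at he)) h
  exact this

lemma cardV : Fintype.card K33.V = 6 := by
  have : Fintype.card (Fin 3 ⊕ Fin 3) = 6 := by simp
  rw [← Nat.card_eq_fintype_card] at this ⊢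
  exact this

/-- vertex colouring used to see three classes -/
def col (i k j l : Fin 3) : Fin 3 ⊕ Fin 3 → Fin 3 :=
  Sum.elim (fun x => if x = i ∨ x = k then 0 else 1) (fun y => if y = j ∨ y = l then 0 else 2)

lemma col_surj : ∀ i k j l : Fin 3, ∀ c : Fin 3, ∃ v, col i k j l v = c := by
  decide +kernel

lemma nz_of_zero (w : K33.E → ℕ) (h : ZeroAcyclic K33 w) (i k j l : Fin 3) (hik : i ≠ k) (hjl : j ≠ l) :
    ¬ (w (i,j) = 0 ∧ w (i,l) = 0 ∧ w (k,j) = 0 ∧ w (k,l) = 0) := by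
  rintro ⟨h1, h2, h3, h4⟩
  rw [zero_iff, cardV] at h
  let C : Finset K33.E := ({(i,j), (i,l), (k,j), (k,l)} : Finset (Fin 3 × Fin 3))
  have hC : C.card = 4 := by
    show Finset.card ({(i,j), (i,l), (k,j), (k,l)} : Finset (Fin 3 × Fin 3)) = 4
    rw [Finset.card_insert_of_notMem, Finset.card_insert_of_notMem, Finset.card_insert_of_notMem,
      Finset.card_singleton] <;> simp [hik, hjl]
  have hm : ∀ e : Fin 3 × Fin 3, e ∈ ({(i,j), (i,l), (k,j), (k,l)} : Finset (Fin 3 × Fin 3)) →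
      e = (i,j) ∨ e = (i,l) ∨ e = (k,j) ∨ e = (k,l) := by
    intro e he; simpa using he
  have hsub : C ⊆ Finset.univ.filter fun e => w e = 0 := by
    intro e he
    refine Finset.mem_filter.2 ⟨Finset.mem_univ _, ?_⟩
    rcases hm e he with rfl | rfl | rfl | rfl <;> assumption
  have hmono := qn_mono K33 hsub
  have hresp : ∀ a b : K33.V, qrel K33 C a b → col i k j l a = col i k j l b := by
    rintro a b ⟨e, he, rfl, rfl⟩
    show col i k j l (Sum.inl e.1) = col i k j l (Sum.inr e.2)
    rcases hm e he with rfl | rfl | rfl | rfl <;> simp [col]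
  have h3 : 3 ≤ qn K33 C := by
    have := Nat.card_le_card_of_surjective (Quot.lift _ hresp) (by
      intro c
      obtain ⟨v, hv⟩ := col_surj i k j l c
      exact ⟨Quot.mk _ v, hv⟩)
    rwa [Nat.card_eq_fintype_card (α := Fin 3), Fintype.card_fin] at this
  omega

lemma zero_of_conn (w : K33.E → ℕ) (T : Finset K33.E) (hc : T.card = 4)
    (hconn : K33.ConnOn (Finset.univ \ T)) (hw : ∀ e ∈ T, w e ≠ 0) : ZeroAcyclic K33 w := by
  have hq : qn K33 (Finset.univ \ T) ≤ 1 := by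
    rw [conn_iff] at hconn
    have : Subsingleton (Quot (qrel K33 (Finset.univ \ T))) := by
      constructor
      intro p q
      obtain ⟨u, rfl⟩ := Quot.exists_rep p
      obtain ⟨v, rfl⟩ := Quot.exists_rep q
      refine hconn (fun x => Quot.mk (qrel K33 (Finset.univ \ T)) u = Quot.mk _ x) ?_ u v rfl
      intro e he
      have : Quot.mk (qrel K33 (Finset.univ \ T)) (K33.src e) = Quot.mk _ (K33.tgt e) :=
        Quot.sound ⟨e, he, rfl, rfl⟩
      rw [this]
    exact Finite.card_le_one_iff_subsingleton.2 this
  have hE : Fintype.card K33.E = 9 := by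
    have : Fintype.card (Fin 3 × Fin 3) = 9 := by simp
    rw [← Nat.card_eq_fintype_card] at this ⊢
    exact this
  have hcard : (Finset.univ \ T).card = 5 := by
    rw [Finset.card_sdiff_of_subset (Finset.subset_univ _), Finset.card_univ, hE, hc]
  refine (zero_iff K33 w).2 ?_
  have hs : (Finset.univ.filter fun e : K33.E => w e = 0) ⊆ Finset.univ \ T := by
    intro e he
    exact Finset.mem_sdiff.2 ⟨Finset.mem_univ _, fun h => hw e h (Finset.mem_filter.1 he).2⟩
  have h1 := qn_mono K33 hs
  have h2 := qn_mono K33 (Finset.empty_subset (Finset.univ.filter fun e : K33.E => w e = 0))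
  rw [qn_empty, Finset.card_empty] at h2
  rw [cardV] at h2 ⊢
  omega

lemma zero_of_p4 (w : Fin 3 × Fin 3 → ℕ) (h : 0 < p4 w) : ZeroAcyclic K33 w := by
  rw [← c4_eq] at h
  obtain ⟨T, hT, hpos⟩ := Finset.exists_ne_zero_of_sum_ne_zero h.ne'
  obtain ⟨-, hc, hconn⟩ := Finset.mem_filter.1 hT
  exact zero_of_conn w T hc hconn fun e he h0 => hpos (Finset.prod_eq_zero he h0)

lemma d3_add (w : Fin 3 × Fin 3 → ℕ) :
    (subdivide K33 w).d 3 + p3 w = (∑ g : Fin 3 × Fin 3, w g).choose 3 :=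
  (congrArg (fun t => (subdivide K33 w).d 3 + t) (c3_eq w)).symm.trans (d_add 3)

lemma d4_add (w : Fin 3 × Fin 3 → ℕ) :
    (subdivide K33 w).d 4 + p4 w = (∑ g : Fin 3 × Fin 3, w g).choose 4 :=
  (congrArg (fun t => (subdivide K33 w).d 4 + t) (c4_eq w)).symm.trans (d_add 4)

lemma d2_add (w : Fin 3 × Fin 3 → ℕ) :
    ∃ s, (subdivide K33 w).d 2 + s = (∑ g : Fin 3 × Fin 3, w g).choose 2 ∧
      2 * s + ∑ g : Fin 3 × Fin 3, w g ^ 2 = (∑ g : Fin 3 × Fin 3, w g) ^ 2 :=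
  ⟨_, d_add 2, c2_eq w⟩

lemma move_d (w : Fin 3 × Fin 3 → ℕ) (a b : Fin 3 × Fin 3) (w' : Fin 3 × Fin 3 → ℕ) (hw' : w' = moveWeight w a b) (hab : a ≠ b) (hlt : w b < w a)
    (h3 : p3 w < p3 w') (h4 : p4 w < p4 w') :
    (subdivide K33 w').d 2 ≤ (subdivide K33 w).d 2 ∧
      (subdivide K33 w').d 3 < (subdivide K33 w).d 3 ∧
      (subdivide K33 w').d 4 < (subdivide K33 w).d 4 := by
  have hs := move_sum w a b hab (by omega)
  have hq := move_sq w a b hab hlt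
  rw [← hw'] at hs hq
  obtain ⟨s, hs1, hs2⟩ := d2_add w
  obtain ⟨t, ht1, ht2⟩ := d2_add w'
  have A3 := d3_add w
  have A4 := d4_add w
  have B3 := d3_add w'
  have B4 := d4_add w'
  rw [hs] at ht1 ht2 B3 B4
  have := hs2.trans ht2.symm
  refine ⟨?_, by omega, by omega⟩
  have : s ≤ t := by omega
  omega

/-- if G is an imbalanced weak K_{3,3}-subdivision, then moving one edge
between two suitable adjacent chains yields G' with d₂(G') ≤ d₂(G), d₃(G') < d₃(G)
and d₄(G') < d₄(G). -/
theorem imbalanced_K33_move_edge (G : Multigraph) (w : K33.E → ℕ)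
    (hsub : IsWeakSubdivision G K33 w) (himb : ¬ BalancedWeights w) :
    ∃ a b : K33.E, a ≠ b ∧ AdjEdges K33 a b ∧ 0 < w a ∧
      ZeroAcyclic K33 (moveWeight w a b) ∧
      (subdivide K33 (moveWeight w a b)).d 2 ≤ G.d 2 ∧
      (subdivide K33 (moveWeight w a b)).d 3 < G.d 3 ∧
      (subdivide K33 (moveWeight w a b)).d 4 < G.d 4 := by
  obtain ⟨hza, ⟨φ⟩⟩ := hsub
  obtain ⟨a, b, hab, hadj, hlt, h3, h4⟩ := alg_main w (nz_of_zero w hza) himb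
  refine ⟨a, b, hab, ?_, lt_of_le_of_lt (Nat.zero_le _) hlt, zero_of_p4 _ (lt_of_le_of_lt (Nat.zero_le _) h4), ?_⟩
  · rcases hadj with h | h
    · exact ⟨Sum.inl a.1, Or.inl rfl, Or.inl (congrArg Sum.inl h.symm)⟩
    · exact ⟨Sum.inr a.2, Or.inr rfl, Or.inr (congrArg Sum.inr h.symm)⟩
  · rw [← iso_d φ 2, ← iso_d φ 3, ← iso_d φ 4]
    exact move_d w a b _ rfl hab hlt h3 h4
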